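/- arXiv:1601.03353 — 2 statements merged into one kernel-verified Lean document; each statement's English description precedes it below -/
import Mathlib

section
/- (Theorem B1) Let φ ∈ A(𝔻) be a symbol mapping 𝔻̄ into 𝔻̄, not equal to the identity, and assume there is no z₀ ∈ 𝔻 such that the iterates φ^n converge to z₀ uniformly on compact subsets of 𝔻 (φ has no interior Denjoy–Wolff point). Then: (1) C_φ : A(𝔻) → A(𝔻) is mean ergodic if and only if either φ is an elliptic automorphism, or there exists z₀ ∈ ∂𝔻 such that φ^n → z₀ uniformly on compact subsets of 𝔻 and for every z ∈ ∂𝔻 and every neighborhood U of z₀ the set {n ∈ ℕ : φ^n(z) ∈ U} has density 1. (2) C_φ is uniformly mean ergodic if and only if φ is an elliptic automorphism with φ^k = identity for some positive integer k. -/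
open Metric Set Filter Complex
open scoped Topology Classical

noncomputable section

/-- Membership in the disc algebra `A(𝔻)`: continuous on the closed unit disc and
holomorphic on the open unit disc. -/
def IsDiscAlg (f : ℂ → ℂ) : Prop :=
  ContinuousOn f (closedBall (0:ℂ) 1) ∧ DifferentiableOn ℂ f (ball (0:ℂ) 1)

/-- Membership in `H^∞(𝔻)`: bounded and holomorphic on the open unit disc. -/
def IsHInf (f : ℂ → ℂ) : Prop :=
  DifferentiableOn ℂ f (ball (0:ℂ) 1) ∧ ∃ M : ℝ, ∀ z ∈ ball (0:ℂ) 1, ‖f z‖ ≤ M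

/-- The Cesàro means `(C_φ)_[n] f = (1/n) ∑_{m=1}^n f ∘ φ^m` of the composition
operator `C_φ f = f ∘ φ`. -/
def cesaro (φ f : ℂ → ℂ) (n : ℕ) (z : ℂ) : ℂ :=
  (n : ℂ)⁻¹ * ∑ m ∈ Finset.Icc 1 n, f (φ^[m] z)

/-- `C_φ` is mean ergodic on `A(𝔻)`: for each `f ∈ A(𝔻)` the Cesàro means converge
in the sup norm on the closed disc. -/
def MeanErgodicDiscAlg (φ : ℂ → ℂ) : Prop :=
  ∀ f : ℂ → ℂ, IsDiscAlg f →
    ∃ g : ℂ → ℂ, TendstoUniformlyOn (cesaro φ f) g atTop (closedBall (0:ℂ) 1)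

/-- `C_φ` is uniformly mean ergodic on `A(𝔻)`: the Cesàro means converge in operator
norm, i.e. uniformly over the unit ball of `A(𝔻)`. -/
def UnifMeanErgodicDiscAlg (φ : ℂ → ℂ) : Prop :=
  ∃ P : (ℂ → ℂ) → ℂ → ℂ, ∀ ε > (0:ℝ), ∃ N : ℕ, ∀ n ≥ N,
    ∀ f : ℂ → ℂ, IsDiscAlg f → (∀ z ∈ closedBall (0:ℂ) 1, ‖f z‖ ≤ 1) →
      ∀ z ∈ closedBall (0:ℂ) 1, ‖cesaro φ f n z - P f z‖ ≤ ε

/-- `C_φ` is mean ergodic on `H^∞(𝔻)`: for each `f ∈ H^∞(𝔻)` the Cesàro means converge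
in the sup norm on the open disc. -/
def MeanErgodicHInf (φ : ℂ → ℂ) : Prop :=
  ∀ f : ℂ → ℂ, IsHInf f →
    ∃ g : ℂ → ℂ, TendstoUniformlyOn (cesaro φ f) g atTop (ball (0:ℂ) 1)

/-- `C_φ` is uniformly mean ergodic on `H^∞(𝔻)`: the Cesàro means converge in operator
norm, i.e. uniformly over the unit ball of `H^∞(𝔻)`. -/
def UnifMeanErgodicHInf (φ : ℂ → ℂ) : Prop :=
  ∃ P : (ℂ → ℂ) → ℂ → ℂ, ∀ ε > (0:ℝ), ∃ N : ℕ, ∀ n ≥ N,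
    ∀ f : ℂ → ℂ, IsHInf f → (∀ z ∈ ball (0:ℂ) 1, ‖f z‖ ≤ 1) →
      ∀ z ∈ ball (0:ℂ) 1, ‖cesaro φ f n z - P f z‖ ≤ ε

/-- `φ` is an automorphism (biholomorphic self-map) of the open unit disc. -/
def IsDiscAutomorphism (φ : ℂ → ℂ) : Prop :=
  DifferentiableOn ℂ φ (ball (0:ℂ) 1) ∧ MapsTo φ (ball (0:ℂ) 1) (ball (0:ℂ) 1) ∧
  ∃ ψ : ℂ → ℂ, DifferentiableOn ℂ ψ (ball (0:ℂ) 1) ∧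
    MapsTo ψ (ball (0:ℂ) 1) (ball (0:ℂ) 1) ∧
    (∀ z ∈ ball (0:ℂ) 1, ψ (φ z) = z) ∧ ∀ z ∈ ball (0:ℂ) 1, φ (ψ z) = z

/-- An elliptic automorphism of the disc: an automorphism with a fixed point in `𝔻`. -/
def IsEllipticAutomorphism (φ : ℂ → ℂ) : Prop :=
  IsDiscAutomorphism φ ∧ ∃ z ∈ ball (0:ℂ) 1, φ z = z

/-- A hyperbolic automorphism of the disc: an automorphism with exactly two fixed
points, both on the unit circle. -/
def IsHyperbolicAutomorphism (φ : ℂ → ℂ) : Prop :=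
  IsDiscAutomorphism φ ∧ ∃ p q : ℂ, p ≠ q ∧ ‖p‖ = 1 ∧ ‖q‖ = 1 ∧ φ p = p ∧ φ q = q ∧
    ∀ z ∈ closedBall (0:ℂ) 1, φ z = z → z = p ∨ z = q

/-- A parabolic automorphism of the disc: an automorphism with exactly one fixed
point, lying on the unit circle. -/
def IsParabolicAutomorphism (φ : ℂ → ℂ) : Prop :=
  IsDiscAutomorphism φ ∧ ∃ p : ℂ, ‖p‖ = 1 ∧ φ p = p ∧
    ∀ z ∈ closedBall (0:ℂ) 1, φ z = z → z = p

/-- A set `J ⊆ ℕ` has density one: `#(J ∩ [0,N]) / N → 1` as `N → ∞`. -/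
def HasDensityOne (J : Set ℕ) : Prop :=
  Tendsto (fun N : ℕ => (((Finset.range (N + 1)).filter (fun n => n ∈ J)).card : ℝ) / N)
    atTop (𝓝 1)

/-- A typical weight on `𝔻`: continuous, strictly positive, bounded, radial,
non-increasing in `|z|`, and tending to `0` as `|z| → 1`. -/
def IsTypicalWeight (v : ℂ → ℝ) : Prop :=
  ContinuousOn v (ball (0:ℂ) 1) ∧ (∀ z ∈ ball (0:ℂ) 1, 0 < v z) ∧
  (∃ M : ℝ, ∀ z ∈ ball (0:ℂ) 1, v z ≤ M) ∧
  (∀ z ∈ ball (0:ℂ) 1, ∀ w ∈ ball (0:ℂ) 1, ‖z‖ = ‖w‖ → v z = v w) ∧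
  (∀ z ∈ ball (0:ℂ) 1, ∀ w ∈ ball (0:ℂ) 1, ‖z‖ ≤ ‖w‖ → v w ≤ v z) ∧
  (∀ ε > (0:ℝ), ∃ r : ℝ, r < 1 ∧ ∀ z ∈ ball (0:ℂ) 1, r ≤ ‖z‖ → v z < ε)

/-- Membership in the weighted space `H_v^∞`. -/
def IsHvInf (v : ℂ → ℝ) (f : ℂ → ℂ) : Prop :=
  DifferentiableOn ℂ f (ball (0:ℂ) 1) ∧ ∃ M : ℝ, ∀ z ∈ ball (0:ℂ) 1, v z * ‖f z‖ ≤ M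

/-- Membership in the weighted space `H_v^0`. -/
def IsHv0 (v : ℂ → ℝ) (f : ℂ → ℂ) : Prop :=
  IsHvInf v f ∧
  ∀ ε > (0:ℝ), ∃ r : ℝ, r < 1 ∧ ∀ z ∈ ball (0:ℂ) 1, r ≤ ‖z‖ → v z * ‖f z‖ < ε

/-- The disc involution exchanging `0` and `a`. -/
def mob (a z : ℂ) : ℂ := (a - z) / (1 - (starRingEnd ℂ) a * z)

theorem mob_den_ne {a z : ℂ} (ha : ‖a‖ < 1) (hz : ‖z‖ ≤ 1) :
    1 - (starRingEnd ℂ) a * z ≠ 0 := by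
  intro h
  have h1 : (starRingEnd ℂ) a * z = 1 := (sub_eq_zero.1 h).symm
  have h2 : ‖a‖ * ‖z‖ = 1 := by
    have := congrArg norm h1
    simpa using this
  nlinarith [norm_nonneg a, norm_nonneg z]

theorem mob_identity (a z : ℂ) :
    ‖1 - (starRingEnd ℂ) a * z‖ ^ 2 - ‖a - z‖ ^ 2 = (1 - ‖a‖ ^ 2) * (1 - ‖z‖ ^ 2) := by
  simp only [Complex.sq_norm, Complex.normSq_apply]
  simp
  ring

theorem mob_norm_sq {a z : ℂ} (ha : ‖a‖ < 1) (hz : ‖z‖ ≤ 1) :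
    1 - ‖mob a z‖ ^ 2 = (1 - ‖a‖ ^ 2) * (1 - ‖z‖ ^ 2) / ‖1 - (starRingEnd ℂ) a * z‖ ^ 2 := by
  have h := mob_den_ne ha hz
  have h' : ‖1 - (starRingEnd ℂ) a * z‖ ≠ 0 := by simpa using h
  rw [← mob_identity, mob, norm_div, div_pow, sub_div, div_self (pow_ne_zero 2 h')]

theorem mob_norm_lt {a z : ℂ} (ha : ‖a‖ < 1) (hz : ‖z‖ < 1) : ‖mob a z‖ < 1 := by
  have h := mob_norm_sq ha hz.le
  have h' : 0 < ‖1 - (starRingEnd ℂ) a * z‖ := by simpa using mob_den_ne ha hz.le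
  have : 0 < 1 - ‖mob a z‖ ^ 2 := by
    rw [h]
    have h1 : 0 < 1 - ‖a‖ ^ 2 := by nlinarith [norm_nonneg a]
    have h2 : 0 < 1 - ‖z‖ ^ 2 := by nlinarith [norm_nonneg z]
    positivity
  nlinarith [norm_nonneg (mob a z)]

theorem mob_norm_le {a z : ℂ} (ha : ‖a‖ < 1) (hz : ‖z‖ ≤ 1) : ‖mob a z‖ ≤ 1 := by
  have h := mob_norm_sq ha hz
  have : 0 ≤ 1 - ‖mob a z‖ ^ 2 := by
    rw [h]
    have h1 : 0 ≤ 1 - ‖a‖ ^ 2 := by nlinarith [norm_nonneg a]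
    have h2 : 0 ≤ 1 - ‖z‖ ^ 2 := by nlinarith [norm_nonneg z]
    positivity
  nlinarith [norm_nonneg (mob a z)]

theorem mob_mob {a z : ℂ} (ha : ‖a‖ < 1) (hz : ‖z‖ ≤ 1) : mob a (mob a z) = z := by
  have h := mob_den_ne ha hz
  have h2 := mob_den_ne ha (mob_norm_le ha hz)
  have h3 := mob_den_ne ha ha.le
  unfold mob at *
  rw [div_eq_iff h2]
  have h4 : (a - z) / (1 - (starRingEnd ℂ) a * z) * (1 - (starRingEnd ℂ) a * z) = a - z :=
    div_mul_cancel₀ _ h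
  linear_combination -h4

theorem mob_self (a : ℂ) : mob a a = 0 := by simp [mob]

theorem mob_zero (a : ℂ) : mob a 0 = a := by simp [mob]

theorem mob_continuousOn {a : ℂ} (ha : ‖a‖ < 1) : ContinuousOn (mob a) (closedBall 0 1) := by
  unfold mob
  refine ContinuousOn.div (by fun_prop) (by fun_prop) ?_
  intro z hz
  exact mob_den_ne ha (by simpa using hz)

theorem mob_differentiableOn {a : ℂ} (ha : ‖a‖ < 1) :
    DifferentiableOn ℂ (mob a) (ball 0 1) := by
  unfold mob
  refine DifferentiableOn.div (by fun_prop) (by fun_prop) ?_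
  intro z hz
  exact mob_den_ne ha (by simpa using (mem_ball_zero_iff.1 hz).le)

theorem mob_mapsTo {a : ℂ} (ha : ‖a‖ < 1) : MapsTo (mob a) (ball 0 1) (ball 0 1) := by
  intro z hz
  rw [mem_ball_zero_iff] at *
  exact mob_norm_lt ha hz

theorem mob_mapsTo' {a : ℂ} (ha : ‖a‖ < 1) :
    MapsTo (mob a) (closedBall 0 1) (closedBall 0 1) := by
  intro z hz
  rw [mem_closedBall_zero_iff] at *
  exact mob_norm_le ha hz

theorem mob_dist {a z : ℂ} (ha : ‖a‖ < 1) (hz : ‖z‖ ≤ 1) : ‖a - z‖ ≤ 2 * ‖mob a z‖ := by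
  have h := mob_den_ne ha hz
  have h1 : a - z = mob a z * (1 - (starRingEnd ℂ) a * z) := by
    unfold mob; rw [div_mul_cancel₀ _ h]
  have h2 : ‖1 - (starRingEnd ℂ) a * z‖ ≤ 2 := by
    refine (norm_sub_le _ _).trans ?_
    simp
    nlinarith [norm_nonneg a, norm_nonneg z]
  rw [h1, norm_mul]
  nlinarith [norm_nonneg (mob a z)]

theorem mob_eq_zero {a z : ℂ} (ha : ‖a‖ < 1) (hz : ‖z‖ ≤ 1) (h : mob a z = 0) : z = a := by
  rw [← mob_mob ha hz, h, mob_zero]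

/-- Schwarz–Pick. -/
theorem schwarz_pick {φ : ℂ → ℂ} (hd : DifferentiableOn ℂ φ (ball 0 1))
    (hm : MapsTo φ (ball 0 1) (ball 0 1)) {a z : ℂ} (ha : ‖a‖ < 1) (hz : ‖z‖ < 1) :
    ‖mob (φ a) (φ z)‖ ≤ ‖mob a z‖ := by
  have hφa : ‖φ a‖ < 1 := by
    have := hm (mem_ball_zero_iff.2 ha); rwa [mem_ball_zero_iff] at this
  have key := Complex.norm_le_norm_of_mapsTo_ball (f := fun w => mob (φ a) (φ (mob a w)))
    (R := 1) (z := mob a z) ?_ ?_ ?_ (mob_norm_lt ha hz)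
  · simpa [mob_mob ha hz.le] using key
  · exact (mob_differentiableOn hφa).comp (hd.comp (mob_differentiableOn ha) (mob_mapsTo ha))
      (hm.comp (mob_mapsTo ha))
  · intro w hw
    exact ball_subset_closedBall (mob_mapsTo hφa (hm (mob_mapsTo ha hw)))
  · simp [mob_zero, mob_self]

/-- Rigidity in Schwarz–Pick at a fixed point. -/
theorem schwarz_rigid {φ : ℂ → ℂ} (hd : DifferentiableOn ℂ φ (ball 0 1))
    (hm : MapsTo φ (ball 0 1) (ball 0 1)) {a z : ℂ} (ha : ‖a‖ < 1) (hz : ‖z‖ < 1)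
    (hfix : φ a = a) (hne : z ≠ a) (heq : ‖mob a (φ z)‖ = ‖mob a z‖) :
    ∃ l : ℂ, ‖l‖ = 1 ∧ ∀ w, ‖w‖ < 1 → mob a (φ w) = l * mob a w := by
  set G : ℂ → ℂ := fun w => mob a (φ (mob a w)) with hG
  have hGd : DifferentiableOn ℂ G (ball 0 1) :=
    (mob_differentiableOn ha).comp (hd.comp (mob_differentiableOn ha) (mob_mapsTo ha))
      (hm.comp (mob_mapsTo ha))
  have hGm : MapsTo G (ball 0 1) (ball 0 1) := fun w hw =>
    mob_mapsTo ha (hm (mob_mapsTo ha hw))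
  have hG0 : G 0 = 0 := by simp [hG, mob_zero, hfix, mob_self]
  have hbz : mob a z ≠ 0 := fun h => hne (mob_eq_zero ha hz.le h)
  have h1 : ‖dslope G 0 (mob a z)‖ = 1 / 1 := by
    rw [dslope_of_ne _ hbz, slope_def_field, hG0]
    simp only [hG, mob_mob ha hz.le, sub_zero, norm_div, heq]
    field_simp
  have h2 := Complex.affine_of_mapsTo_ball_of_norm_dslope_eq_div (R₁ := 1) (R₂ := 1) hGd
    (by rw [hG0]; exact hGm.mono_right ball_subset_closedBall)
    (by simpa using mob_norm_lt ha hz) h1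
  refine ⟨dslope G 0 (mob a z), by simpa using h1, fun w hw => ?_⟩
  have := h2 (x := mob a w) (by simpa using mob_norm_lt ha hw)
  simp [hG0] at this
  simp only [hG, mob_mob ha hw.le] at this
  rw [this]
  ring

theorem orbit_limit {φ : ℂ → ℂ} (hc : ContinuousOn φ (ball 0 1))
    (hm : MapsTo φ (ball 0 1) (ball 0 1)) {u : ℂ → ℝ} (hu : ContinuousOn u (ball 0 1))
    {z p : ℂ} (hp : p ∈ ball (0:ℂ) 1)
    (hanti : Antitone fun n => u (φ^[n] z)) {ψ : ℕ → ℕ} (hψ : StrictMono ψ)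
    (hlim : Tendsto (fun k => φ^[ψ k] z) atTop (𝓝 p)) :
    Tendsto (fun n => u (φ^[n] z)) atTop (𝓝 (u p)) ∧ u (φ p) = u p := by
  have hpn : ball (0:ℂ) 1 ∈ 𝓝 p := isOpen_ball.mem_nhds hp
  have hpn' : ball (0:ℂ) 1 ∈ 𝓝 (φ p) := isOpen_ball.mem_nhds (hm hp)
  have h1 : Tendsto (fun k => u (φ^[ψ k] z)) atTop (𝓝 (u p)) :=
    ((hu.continuousAt hpn).tendsto).comp hlim
  have h2 : Tendsto (fun n => u (φ^[n] z)) atTop (𝓝 (u p)) :=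
    (tendsto_iff_tendsto_subseq_of_antitone hanti hψ.tendsto_atTop).2 h1
  refine ⟨h2, ?_⟩
  have h3 : Tendsto (fun k => φ (φ^[ψ k] z)) atTop (𝓝 (φ p)) :=
    ((hc.continuousAt hpn).tendsto).comp hlim
  have h4 : Tendsto (fun k => u (φ (φ^[ψ k] z))) atTop (𝓝 (u (φ p))) :=
    ((hu.continuousAt hpn').tendsto).comp h3
  have h5 : Tendsto (fun k => u (φ (φ^[ψ k] z))) atTop (𝓝 (u p)) := by
    have := h2.comp ((tendsto_add_atTop_nat 1).comp hψ.tendsto_atTop)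
    refine this.congr fun k => ?_
    simp [Function.iterate_succ_apply']
  exact tendsto_nhds_unique h4 h5

theorem fixed_case {φ : ℂ → ℂ} (hd : DifferentiableOn ℂ φ (ball 0 1))
    (hm : MapsTo φ (ball 0 1) (ball 0 1)) {a : ℂ} (ha : ‖a‖ < 1) (hfix : φ a = a) :
    (∃ l : ℂ, ‖l‖ = 1 ∧ ∀ w, ‖w‖ < 1 → mob a (φ w) = l * mob a w) ∨
    TendstoLocallyUniformlyOn (fun (n : ℕ) (z : ℂ) => φ^[n] z) (fun _ => a) atTop
        (ball (0:ℂ) 1) := by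
  by_cases H : ∃ z, ‖z‖ < 1 ∧ z ≠ a ∧ ‖mob a (φ z)‖ = ‖mob a z‖
  · obtain ⟨z, hz, hne, heq⟩ := H
    exact Or.inl (schwarz_rigid hd hm ha hz hfix hne heq)
  right
  have hmn : ∀ n, MapsTo (φ^[n]) (ball 0 1) (ball 0 1) := fun n => hm.iterate n
  have hab : a ∈ ball (0:ℂ) 1 := by simpa using ha
  have hanti : ∀ z ∈ ball (0:ℂ) 1, Antitone fun n => ‖mob a (φ^[n] z)‖ := by
    intro z hz
    refine antitone_nat_of_succ_le fun n => ?_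
    have := schwarz_pick hd hm ha (mem_ball_zero_iff.1 (hmn n hz))
    rw [hfix] at this
    simpa [Function.iterate_succ_apply'] using this
  have hcm : ContinuousOn (fun z => ‖mob a z‖) (ball 0 1) :=
    ((mob_continuousOn ha).mono ball_subset_closedBall).norm
  have hpt : ∀ z ∈ ball (0:ℂ) 1, Tendsto (fun n => ‖mob a (φ^[n] z)‖) atTop (𝓝 0) := by
    intro z hz
    have hz1 := mem_ball_zero_iff.1 hz
    have hs : ‖mob a z‖ < 1 := mob_norm_lt ha hz1
    have hsub : closedBall (0:ℂ) ‖mob a z‖ ⊆ ball 0 1 := closedBall_subset_ball hs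
    have hK : IsCompact (mob a '' closedBall 0 ‖mob a z‖) :=
      (isCompact_closedBall _ _).image_of_continuousOn
        ((mob_continuousOn ha).mono (hsub.trans ball_subset_closedBall))
    have hx : ∀ n, φ^[n] z ∈ mob a '' closedBall 0 ‖mob a z‖ := by
      intro n
      refine ⟨mob a (φ^[n] z), ?_, mob_mob ha (mem_ball_zero_iff.1 (hmn n hz)).le⟩
      simpa using hanti z hz (Nat.zero_le n)
    obtain ⟨p, hp, ψ, hψ, hlim⟩ := hK.tendsto_subseq hx
    have hpb : p ∈ ball (0:ℂ) 1 := by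
      obtain ⟨q, hq, rfl⟩ := hp
      exact mob_mapsTo ha (hsub hq)
    obtain ⟨h1, h2⟩ := orbit_limit hd.continuousOn hm hcm hpb (hanti z hz) hψ hlim
    have hpa : p = a := by
      by_contra hne
      exact H ⟨p, mem_ball_zero_iff.1 hpb, hne, h2⟩
    simpa [hpa, mob_self] using h1
  have hD : TendstoLocallyUniformlyOn (fun (n : ℕ) (z : ℂ) => ‖mob a (φ^[n] z)‖)
      (fun _ => (0:ℝ)) atTop (ball (0:ℂ) 1) :=
    Antitone.tendstoLocallyUniformlyOn_of_forall_tendsto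
      (fun n => hcm.comp (hd.continuousOn.iterate hm n) (hmn n)) hanti continuousOn_const hpt
  rw [Metric.tendstoLocallyUniformlyOn_iff] at hD ⊢
  intro ε hε x hx
  obtain ⟨t, ht, h⟩ := hD (ε / 2) (by positivity) x hx
  refine ⟨t ∩ ball 0 1, inter_mem ht self_mem_nhdsWithin, ?_⟩
  filter_upwards [h] with n hn y hy
  have h1 := hn y hy.1
  have h2 := mob_dist ha (mem_ball_zero_iff.1 (hmn n hy.2)).le
  rw [dist_eq_norm]
  simp at h1
  linarith

theorem fp_scaled {φ : ℂ → ℂ} (ha : IsDiscAlg φ)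
    (hm : MapsTo φ (ball 0 1) (ball 0 1)) {r : ℝ} (hr0 : 0 < r) (hr1 : r < 1) :
    ∃ z : ℂ, ‖z‖ ≤ r ∧ r * φ z = z := by
  have hsub : closedBall (0:ℂ) r ⊆ ball 0 1 := closedBall_subset_ball hr1
  have hmn : ∀ z : ℂ, ‖z‖ ≤ r → ‖φ z‖ < 1 := fun z hz => by
    simpa using hm (hsub (mem_closedBall_zero_iff.2 hz))
  have hmr : ∀ z : ℂ, ‖z‖ ≤ r → ‖r * φ z‖ ≤ r := fun z hz => by
    have := hmn z hz
    rw [norm_mul, Complex.norm_real, Real.norm_of_nonneg hr0.le]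
    nlinarith
  have hφc : ContinuousOn φ (closedBall 0 r) :=
    ha.1.mono (hsub.trans ball_subset_closedBall)
  have hc : ContinuousOn (fun z => ‖mob z (r * φ z)‖) (closedBall 0 r) := by
    unfold mob
    refine (ContinuousOn.div (by fun_prop) ?_ ?_).norm
    · refine continuousOn_const.sub (ContinuousOn.mul ?_ (by fun_prop))
      exact Complex.continuous_conj.continuousOn
    · intro z hz
      have hz' := mem_closedBall_zero_iff.1 hz
      exact mob_den_ne (by linarith) (by linarith [hmr z hz'])
  obtain ⟨z, hz, hmin⟩ := (isCompact_closedBall (0:ℂ) r).exists_isMinOn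
    ⟨0, by simpa using hr0.le⟩ hc
  have hz' := mem_closedBall_zero_iff.1 hz
  refine ⟨z, hz', ?_⟩
  by_contra hne
  obtain ⟨y, hy⟩ : ∃ y, y = r * φ z := ⟨_, rfl⟩
  have hyr : ‖y‖ ≤ r := hy ▸ hmr z hz'
  rw [← hy] at hne
  have h1 : ‖mob z y‖ ≤ ‖mob y (r * φ y)‖ := by
    have := hmin (mem_closedBall_zero_iff.2 hyr)
    simp only [mem_ofPred_eq] at this
    rwa [← hy] at this
  have h2 : 0 < ‖mob z y‖ := by
    rw [norm_pos_iff]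
    intro h
    exact hne (mob_eq_zero (by linarith) (by linarith) h)
  have h3 := schwarz_pick ha.2 hm (a := z) (z := y) (by linarith) (by linarith)
  have h4 : ‖mob y (r * φ y)‖ < ‖mob z y‖ := by
    by_cases he : φ z = φ y
    · have : y = r * φ y := by rw [← he]; exact hy
      rw [← this, mob_self]; simpa using h2
    · refine lt_of_lt_of_le ?_ h3
      have hA := hmn z hz'
      have hB := hmn y hyr
      generalize φ z = A at *
      generalize φ y = B at *
      rw [hy]
      have d1 := mob_den_ne hA hB.le
      have d2 : 1 - (starRingEnd ℂ) (r * A) * (r * B) ≠ 0 := by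
        refine mob_den_ne ?_ ?_ <;>
          rw [norm_mul, Complex.norm_real, Real.norm_of_nonneg hr0.le] <;> nlinarith
      have d1' : 0 < ‖1 - (starRingEnd ℂ) A * B‖ := norm_pos_iff.2 d1
      have d2' := norm_pos_iff.2 d2
      have hAB : 0 < ‖A - B‖ := norm_pos_iff.2 (sub_ne_zero.2 he)
      unfold mob
      rw [norm_div, norm_div, div_lt_div_iff₀ d2' d1', ← mul_sub, norm_mul, Complex.norm_real,
        Real.norm_of_nonneg hr0.le]
      have key : ‖1 - (starRingEnd ℂ) (r * A) * (r * B)‖ ^ 2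
          - (r * ‖1 - (starRingEnd ℂ) A * B‖) ^ 2
          = (1 - r ^ 2) * (1 - r ^ 2 * (‖A‖ ^ 2 * ‖B‖ ^ 2)) := by
        rw [mul_pow]
        simp only [Complex.sq_norm, Complex.normSq_apply]
        simp
        ring
      have pos : 0 < (1 - r ^ 2) * (1 - r ^ 2 * (‖A‖ ^ 2 * ‖B‖ ^ 2)) := by
        have e1 : r ^ 2 < 1 := by nlinarith
        have e2 : ‖A‖ ^ 2 ≤ 1 := by nlinarith [norm_nonneg A]
        have e3 : ‖B‖ ^ 2 ≤ 1 := by nlinarith [norm_nonneg B]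
        have e4 : ‖A‖ ^ 2 * ‖B‖ ^ 2 ≤ 1 := mul_le_one₀ e2 (by positivity) e3
        have e5 : 0 ≤ ‖A‖ ^ 2 * ‖B‖ ^ 2 := by positivity
        apply mul_pos
        · linarith
        · nlinarith
      have : r * ‖1 - (starRingEnd ℂ) A * B‖ < ‖1 - (starRingEnd ℂ) (r * A) * (r * B)‖ :=
        lt_of_pow_lt_pow_left₀ 2 d2'.le (by linarith)
      nlinarith
  linarith

/-- Poisson kernel. -/
def pois (a z : ℂ) : ℝ := (1 - ‖z‖ ^ 2) / ‖1 - (starRingEnd ℂ) a * z‖ ^ 2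

theorem pois_den_ne {a z : ℂ} (ha : ‖a‖ ≤ 1) (hz : ‖z‖ < 1) :
    1 - (starRingEnd ℂ) a * z ≠ 0 := by
  intro h
  have h1 : (starRingEnd ℂ) a * z = 1 := (sub_eq_zero.1 h).symm
  have h2 : ‖a‖ * ‖z‖ = 1 := by
    have := congrArg norm h1
    simpa using this
  nlinarith [norm_nonneg a, norm_nonneg z]

theorem wolff {φ : ℂ → ℂ} (ha : IsDiscAlg φ)
    (hm : MapsTo φ (ball 0 1) (ball 0 1)) (hno : ∀ a, ‖a‖ < 1 → φ a ≠ a) :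
    ∃ z₀ : ℂ, ‖z₀‖ = 1 ∧ ∀ z, ‖z‖ < 1 → pois z₀ z ≤ pois z₀ (φ z) := by
  set r : ℕ → ℝ := fun n => 1 - 1 / ((n:ℝ) + 2) with hr
  have hr0 : ∀ n, 0 < r n := fun n => by
    simp only [hr]
    rw [sub_pos, div_lt_one (by positivity)]
    linarith [(Nat.cast_nonneg n : (0:ℝ) ≤ n)]
  have hr1 : ∀ n, r n < 1 := fun n => by
    simp only [hr]
    have : (0:ℝ) < 1 / ((n:ℝ) + 2) := by positivity
    linarith
  have hrl : Tendsto r atTop (𝓝 1) := by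
    have h1 : Tendsto (fun n : ℕ => 1 / ((n:ℝ) + 2)) atTop (𝓝 0) :=
      tendsto_const_nhds.div_atTop
        (tendsto_atTop_add_const_right _ _ tendsto_natCast_atTop_atTop)
    simpa [hr] using tendsto_const_nhds.sub h1
  choose x hx1 hx2 using fun n => fp_scaled ha hm (hr0 n) (hr1 n)
  have hxb : ∀ n, ‖x n‖ < 1 := fun n => (hx1 n).trans_lt (hr1 n)
  obtain ⟨z₀, hz₀, ψ, hψ, hlim⟩ := (isCompact_closedBall (0:ℂ) 1).tendsto_subseq
    (fun n => mem_closedBall_zero_iff.2 (hxb n).le)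
  have hrψ : Tendsto (fun k => ((r (ψ k) : ℝ) : ℂ)) atTop (𝓝 1) := by
    have := (Complex.continuous_ofReal.tendsto 1).comp (hrl.comp hψ.tendsto_atTop)
    simpa [Function.comp_def] using this
  have hfix : φ z₀ = z₀ := by
    have h1 : Tendsto (fun k => φ (x (ψ k))) atTop (𝓝 (φ z₀)) := by
      have h2 : Tendsto (fun k => x (ψ k)) atTop (𝓝[closedBall 0 1] z₀) :=
        tendsto_nhdsWithin_iff.2 ⟨hlim, Eventually.of_forall fun k =>
          mem_closedBall_zero_iff.2 (hxb _).le⟩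
      exact (ha.1 z₀ hz₀).tendsto.comp h2
    have h3 := hrψ.mul h1
    simp only [hx2, one_mul] at h3
    exact tendsto_nhds_unique h3 hlim
  have hn1 : ‖z₀‖ = 1 := by
    refine le_antisymm (mem_closedBall_zero_iff.1 hz₀) ?_
    by_contra h
    exact hno z₀ (not_le.1 h) hfix
  refine ⟨z₀, hn1, fun z hz => ?_⟩
  have hφz : ‖φ z‖ < 1 := by simpa using hm (mem_ball_zero_iff.2 hz)
  have hc : Tendsto (fun k => (starRingEnd ℂ) (x (ψ k))) atTop (𝓝 ((starRingEnd ℂ) z₀)) :=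
    (Complex.continuous_conj.tendsto z₀).comp hlim
  have hL : Tendsto (fun k => pois (x (ψ k)) z) atTop (𝓝 (pois z₀ z)) := by
    unfold pois
    refine Tendsto.div tendsto_const_nhds ((tendsto_const_nhds.sub
      (hc.mul tendsto_const_nhds)).norm.pow 2) ?_
    have := pois_den_ne hn1.le hz
    simpa using this
  have hR : Tendsto (fun k => pois (x (ψ k)) ((r (ψ k) : ℝ) * φ z)) atTop
      (𝓝 (pois z₀ (φ z))) := by
    have hmul : Tendsto (fun k => ((r (ψ k) : ℝ) : ℂ) * φ z) atTop (𝓝 (φ z)) := by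
      simpa using hrψ.mul_const (φ z)
    unfold pois
    refine Tendsto.div (tendsto_const_nhds.sub (hmul.norm.pow 2)) ((tendsto_const_nhds.sub
      (hc.mul hmul)).norm.pow 2) ?_
    have := pois_den_ne hn1.le hφz
    simpa using this
  refine le_of_tendsto_of_tendsto' hL hR fun k => ?_
  set n := ψ k
  have hmr : MapsTo (fun w => (r n : ℂ) * φ w) (ball 0 1) (ball 0 1) := by
    intro w hw
    have := hm hw
    rw [mem_ball_zero_iff] at *
    rw [norm_mul, Complex.norm_real, Real.norm_of_nonneg (hr0 n).le]
    nlinarith [hr0 n, hr1 n]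
  have hsp := schwarz_pick (φ := fun w => (r n : ℂ) * φ w) (ha.2.const_mul _) hmr (hxb n) hz
  simp only [hx2] at hsp
  have hrz : ‖(r n : ℂ) * φ z‖ < 1 := by simpa using hmr (mem_ball_zero_iff.2 hz)
  have e1 := mob_norm_sq (hxb n) hz.le
  have e2 := mob_norm_sq (hxb n) hrz.le
  have e3 : 1 - ‖mob (x n) z‖ ^ 2 ≤ 1 - ‖mob (x n) (r n * φ z)‖ ^ 2 := by
    have := pow_le_pow_left₀ (norm_nonneg _) hsp 2
    linarith
  rw [e1, e2, mul_div_assoc, mul_div_assoc] at e3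
  have e4 : 0 < 1 - ‖x n‖ ^ 2 := by nlinarith [norm_nonneg (x n), hxb n]
  exact le_of_mul_le_mul_left e3 e4

/-- Cayley transform to the right half-plane. -/
def cay (a z : ℂ) : ℂ := (1 + (starRingEnd ℂ) a * z) / (1 - (starRingEnd ℂ) a * z)

theorem cay_re {a z : ℂ} (ha : ‖a‖ = 1) : (cay a z).re = pois a z := by
  unfold cay pois
  have h1 : ‖(starRingEnd ℂ) a * z‖ ^ 2 = ‖z‖ ^ 2 := by simp [ha]
  rw [← h1]
  generalize (starRingEnd ℂ) a * z = w
  rw [Complex.div_re]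
  simp only [Complex.sq_norm, ← add_div]
  congr 1
  simp [Complex.normSq_apply]
  ring

theorem norm_one_sub {a z : ℂ} (ha : ‖a‖ = 1) : ‖1 - (starRingEnd ℂ) a * z‖ = ‖a - z‖ := by
  have h : (starRingEnd ℂ) a * a = 1 := by
    rw [mul_comm, Complex.mul_conj, Complex.normSq_eq_norm_sq, ha]; simp
  have : 1 - (starRingEnd ℂ) a * z = (starRingEnd ℂ) a * (a - z) := by
    rw [mul_sub, h]
  rw [this, norm_mul]
  simp [ha]

theorem cay_inj {a z w : ℂ} (ha : ‖a‖ = 1) (hz : ‖z‖ < 1) (hw : ‖w‖ < 1)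
    (h : cay a z = cay a w) : z = w := by
  unfold cay at h
  rw [div_eq_div_iff (pois_den_ne ha.le hz) (pois_den_ne ha.le hw)] at h
  have h2 : (starRingEnd ℂ) a * (z - w) = 0 := by linear_combination h / 2
  rcases mul_eq_zero.1 h2 with h3 | h3
  · have : a = 0 := by simpa using h3
    simp [this] at ha
  · exact sub_eq_zero.1 h3

theorem cay_diff {a : ℂ} (ha : ‖a‖ = 1) : DifferentiableOn ℂ (cay a) (ball 0 1) := by
  unfold cay
  refine DifferentiableOn.div (by fun_prop) (by fun_prop) fun z hz => ?_
  exact pois_den_ne ha.le (by simpa using hz)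

/-- A holomorphic function with nonnegative real part, vanishing somewhere, is constant. -/
theorem const_of_re_nonneg {D : ℂ → ℂ} (hD : DifferentiableOn ℂ D (ball 0 1))
    (hre : ∀ z ∈ ball (0:ℂ) 1, 0 ≤ (D z).re) {p : ℂ} (hp : p ∈ ball (0:ℂ) 1)
    (h0 : (D p).re = 0) : ∀ z ∈ ball (0:ℂ) 1, D z = D p := by
  have hne : ∀ z ∈ ball (0:ℂ) 1, D z + 1 ≠ 0 := by
    intro z hz h
    have h1 := hre z hz
    have := congrArg Complex.re h
    simp at this
    linarith
  set q : ℂ → ℂ := fun z => (D z - 1) / (D z + 1) with hq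
  have hqd : DifferentiableOn ℂ q (ball 0 1) :=
    (hD.sub_const 1).div (hD.add_const 1) hne
  have hsq : ∀ w : ℂ, ‖w + 1‖ ^ 2 - ‖w - 1‖ ^ 2 = 4 * w.re := by
    intro w
    simp only [Complex.sq_norm, Complex.normSq_apply]
    simp
    ring
  have hq1 : ∀ z ∈ ball (0:ℂ) 1, ‖q z‖ ≤ 1 := by
    intro z hz
    simp only [hq, norm_div]
    rw [div_le_one (norm_pos_iff.2 (hne z hz))]
    refine le_of_sq_le_sq ?_ (norm_nonneg _)
    linarith [hsq (D z), hre z hz]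
  have hqp : ‖q p‖ = 1 := by
    simp only [hq, norm_div]
    rw [div_eq_one_iff_eq (norm_pos_iff.2 (hne p hp)).ne']
    have := hsq (D p)
    rw [h0] at this
    refine (pow_left_inj₀ (norm_nonneg _) (norm_nonneg _) two_ne_zero).1 (by linarith)
  have hmax : IsMaxOn (norm ∘ q) (ball 0 1) p := by
    intro z hz
    simp only [mem_ofPred_eq, Function.comp, hqp]
    exact hq1 z hz
  have hE := Complex.eqOn_of_isPreconnected_of_isMaxOn_norm
    (convex_ball (0:ℂ) 1).isPreconnected isOpen_ball hqd hp hmax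
  intro z hz
  have h1 : q z = q p := hE hz
  simp only [hq] at h1
  rw [div_eq_div_iff (hne z hz) (hne p hp)] at h1
  linear_combination h1 / 2

theorem no_interior_cluster {φ : ℂ → ℂ} (hd : DifferentiableOn ℂ φ (ball 0 1))
    (hm : MapsTo φ (ball 0 1) (ball 0 1)) (hno : ∀ a, ‖a‖ < 1 → φ a ≠ a)
    {z₀ : ℂ} (h1 : ‖z₀‖ = 1) (hw : ∀ z, ‖z‖ < 1 → pois z₀ z ≤ pois z₀ (φ z))
    {p : ℂ} (hp : p ∈ ball (0:ℂ) 1) {ψ : ℕ → ℕ} (hψ : StrictMono ψ)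
    (hlim : Tendsto (fun k => φ^[ψ k] 0) atTop (𝓝 p)) : False := by
  have hmn : ∀ n, φ^[n] 0 ∈ ball (0:ℂ) 1 := fun n => hm.iterate n (by simp)
  have hcd := cay_diff h1
  have hu : ContinuousOn (fun z => -(pois z₀ z)) (ball 0 1) := by
    have : ContinuousOn (fun z => -(cay z₀ z).re) (ball 0 1) :=
      (Complex.continuous_re.comp_continuousOn hcd.continuousOn).neg
    simpa only [cay_re h1] using this
  have hanti : Antitone fun n => -(pois z₀ (φ^[n] 0)) := by
    refine antitone_nat_of_succ_le fun n => ?_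
    rw [Function.iterate_succ_apply']
    exact neg_le_neg (hw _ (by simpa using hmn n))
  obtain ⟨-, h2⟩ := orbit_limit hd.continuousOn hm hu hp hanti hψ hlim
  have hconst := const_of_re_nonneg (D := fun z => cay z₀ (φ z) - cay z₀ z)
    ((hcd.comp hd hm).sub hcd) (by
      intro z hz
      simp only [Complex.sub_re, cay_re h1]
      linarith [hw z (by simpa using hz)]) hp (by
      simp only [Complex.sub_re, cay_re h1]
      linarith)
  set c := cay z₀ (φ p) - cay z₀ p with hc
  have hc0 : c ≠ 0 := by
    intro h
    refine hno p (by simpa using hp) (cay_inj h1 ?_ ?_ (sub_eq_zero.1 h))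
    · simpa using hm hp
    · simpa using hp
  have hit : ∀ n : ℕ, cay z₀ (φ^[n] 0) = cay z₀ 0 + n * c := by
    intro n
    induction n with
    | zero => simp
    | succ k ih =>
      have := hconst _ (hmn k)
      rw [Function.iterate_succ_apply']
      push_cast
      linear_combination this + ih
  have hL : Tendsto (fun k => ‖cay z₀ (φ^[ψ k] 0)‖) atTop (𝓝 ‖cay z₀ p‖) :=
    ((hcd.continuousOn.continuousAt (isOpen_ball.mem_nhds hp)).tendsto.comp hlim).norm
  have hT : Tendsto (fun k => ‖cay z₀ (φ^[ψ k] 0)‖) atTop atTop := by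
    have h3 : Tendsto (fun k => (ψ k : ℝ) * ‖c‖ - ‖cay z₀ 0‖) atTop atTop := by
      refine tendsto_atTop_add_const_right _ _ ?_
      exact (tendsto_natCast_atTop_atTop.comp hψ.tendsto_atTop).atTop_mul_const
        (norm_pos_iff.2 hc0)
    refine tendsto_atTop_mono (fun k => ?_) h3
    rw [hit]
    have := norm_sub_le (cay z₀ 0 + ψ k * c) (cay z₀ 0)
    rw [add_sub_cancel_left, norm_mul, Complex.norm_natCast] at this
    linarith
  exact not_tendsto_nhds_of_tendsto_atTop hT _ hL

theorem dw_boundary {φ : ℂ → ℂ} (ha : IsDiscAlg φ)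
    (hm : MapsTo φ (ball 0 1) (ball 0 1)) (hno : ∀ a, ‖a‖ < 1 → φ a ≠ a) :
    ∃ z₀ : ℂ, ‖z₀‖ = 1 ∧
      TendstoLocallyUniformlyOn (fun (n : ℕ) (z : ℂ) => φ^[n] z) (fun _ => z₀) atTop
        (ball (0:ℂ) 1) := by
  obtain ⟨z₀, h1, hw⟩ := wolff ha hm hno
  refine ⟨z₀, h1, ?_⟩
  have hmn : ∀ n z, ‖z‖ < 1 → ‖φ^[n] z‖ < 1 := fun n z hz => by
    simpa using hm.iterate n (mem_ball_zero_iff.2 hz)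
  have hdn : ∀ n, DifferentiableOn ℂ (φ^[n]) (ball 0 1) := fun n => ha.2.iterate hm n
  have hlim : Tendsto (fun n => 1 - ‖φ^[n] 0‖ ^ 2) atTop (𝓝 0) := by
    rw [Metric.tendsto_atTop]
    by_contra hcon
    push Not at hcon
    obtain ⟨ε, hε, hcon⟩ := hcon
    have hb : ∀ n, 0 < 1 - ‖φ^[n] 0‖ ^ 2 := fun n => by
      have := hmn n 0 (by simp)
      nlinarith [norm_nonneg (φ^[n] 0)]
    have hfreq : ∃ᶠ n in atTop, φ^[n] 0 ∈ closedBall (0:ℂ) (√(1 - ε)) := by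
      rw [frequently_atTop]
      intro N
      obtain ⟨n, hn, h⟩ := hcon N
      refine ⟨n, hn, ?_⟩
      rw [Real.dist_eq, sub_zero, abs_of_pos (hb n)] at h
      rw [mem_closedBall_zero_iff]
      exact Real.le_sqrt_of_sq_le (by linarith)
    obtain ⟨p, hp, ψ, hψ, hl⟩ := (isCompact_closedBall (0:ℂ) _).tendsto_subseq' hfreq
    refine no_interior_cluster ha.2 hm hno h1 hw ?_ hψ hl
    refine closedBall_subset_ball ?_ hp
    rw [Real.sqrt_lt' one_pos]
    linarith
  have hmono : ∀ n z, ‖z‖ < 1 → pois z₀ z ≤ pois z₀ (φ^[n] z) := by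
    intro n z hz
    induction n with
    | zero => simp
    | succ k ih =>
      rw [Function.iterate_succ_apply']
      exact ih.trans (hw _ (hmn k z hz))
  have key : ∀ n z, ‖z‖ < 1 →
      ‖z₀ - φ^[n] z‖ ^ 2 * (1 - ‖z‖ ^ 2) ^ 2 ≤ 16 * (1 - ‖φ^[n] 0‖ ^ 2) := by
    intro n z hz
    have hA := hmn n z hz
    have hB := hmn n 0 (by simp)
    have hs := schwarz_pick (hdn n) (hm.iterate n) (a := 0) (z := z) (by simp) hz
    have hmo := hmono n z hz
    have hid := mob_norm_sq hB hA.le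
    have hp0 : ‖mob 0 z‖ = ‖z‖ := by simp [mob]
    rw [hp0] at hs
    set A := φ^[n] z
    set B := φ^[n] 0
    unfold pois at hmo
    rw [norm_one_sub h1, norm_one_sub h1] at hmo
    have hz2 : 0 < 1 - ‖z‖ ^ 2 := by nlinarith [norm_nonneg z]
    have hA2 : 0 < 1 - ‖A‖ ^ 2 := by nlinarith [norm_nonneg A]
    have hB2 : 0 < 1 - ‖B‖ ^ 2 := by nlinarith [norm_nonneg B]
    have hzz : 0 < ‖z₀ - z‖ := by
      rw [← norm_one_sub h1]; exact norm_pos_iff.2 (pois_den_ne h1.le hz)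
    have hzA : 0 < ‖z₀ - A‖ := by
      rw [← norm_one_sub h1]; exact norm_pos_iff.2 (pois_den_ne h1.le hA)
    have hzz2 : ‖z₀ - z‖ ≤ 2 := by
      have := norm_sub_le z₀ z
      linarith
    rw [div_le_div_iff₀ (by positivity) (by positivity)] at hmo
    have hden : 1 - ‖A‖ ≤ ‖1 - (starRingEnd ℂ) B * A‖ := by
      have h3 := norm_sub_norm_le 1 ((starRingEnd ℂ) B * A)
      simp at h3
      nlinarith [norm_nonneg A, norm_nonneg B]
    have hden0 : 0 < ‖1 - (starRingEnd ℂ) B * A‖ := by linarith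
    have h4 : 1 - ‖z‖ ^ 2 ≤ 1 - ‖mob B A‖ ^ 2 := by
      have := pow_le_pow_left₀ (norm_nonneg _) hs 2
      linarith
    rw [hid, le_div_iff₀ (by positivity)] at h4
    have h5 : (1 - ‖A‖ ^ 2) / 2 ≤ ‖1 - (starRingEnd ℂ) B * A‖ := by
      nlinarith [norm_nonneg A]
    have h6 : ((1 - ‖A‖ ^ 2) / 2) ^ 2 ≤ ‖1 - (starRingEnd ℂ) B * A‖ ^ 2 :=
      pow_le_pow_left₀ (by linarith) h5 2
    have h7 : (1 - ‖z‖ ^ 2) * (1 - ‖A‖ ^ 2) ≤ 4 * (1 - ‖B‖ ^ 2) := by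
      have : (1 - ‖z‖ ^ 2) * ((1 - ‖A‖ ^ 2) / 2) ^ 2 ≤ (1 - ‖B‖ ^ 2) * (1 - ‖A‖ ^ 2) :=
        (mul_le_mul_of_nonneg_left h6 hz2.le).trans h4
      refine le_of_mul_le_mul_right ?_ hA2
      nlinarith
    have h8 : ‖z₀ - z‖ ^ 2 ≤ 4 := by nlinarith
    have h9 : (1 - ‖z‖ ^ 2) * ‖z₀ - A‖ ^ 2 ≤ (1 - ‖A‖ ^ 2) * 4 :=
      hmo.trans (mul_le_mul_of_nonneg_left h8 hA2.le)
    have h10 := mul_le_mul_of_nonneg_left h9 hz2.le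
    nlinarith
  rw [Metric.tendstoLocallyUniformlyOn_iff]
  intro ε hε x hx
  have hx' : ‖x‖ < 1 := by simpa using hx
  obtain ⟨R, hxR, hR1⟩ := exists_between hx'
  have hR0 : 0 ≤ R := (norm_nonneg x).trans hxR.le
  refine ⟨ball 0 R, mem_nhdsWithin_of_mem_nhds (isOpen_ball.mem_nhds (by simpa using hxR)), ?_⟩
  have hδ : 0 < ε ^ 2 * (1 - R ^ 2) ^ 2 / 16 := by
    have : 0 < 1 - R ^ 2 := by nlinarith
    positivity
  filter_upwards [hlim.eventually (gt_mem_nhds hδ)] with n hn y hy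
  have hyR : ‖y‖ < R := by simpa using hy
  have hk := key n y (by linarith)
  rw [dist_eq_norm]
  refine lt_of_pow_lt_pow_left₀ 2 hε.le ?_
  have h2 : (1 - R ^ 2) ^ 2 ≤ (1 - ‖y‖ ^ 2) ^ 2 := by
    refine pow_le_pow_left₀ (by nlinarith) ?_ 2
    nlinarith [norm_nonneg y]
  have h3 : 0 < (1 - R ^ 2) ^ 2 := by
    have : 0 < 1 - R ^ 2 := by nlinarith
    positivity
  have h4 : ‖z₀ - φ^[n] y‖ ^ 2 * (1 - R ^ 2) ^ 2 < ε ^ 2 * (1 - R ^ 2) ^ 2 := by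
    have := mul_le_mul_of_nonneg_left h2 (sq_nonneg ‖z₀ - φ^[n] y‖)
    linarith
  exact lt_of_mul_lt_mul_right h4 h3.le

theorem cesaro_eq (φ f : ℂ → ℂ) (n : ℕ) (z : ℂ) :
    cesaro φ f n z = (n : ℂ)⁻¹ * ∑ i ∈ Finset.range n, f (φ^[i + 1] z) := by
  unfold cesaro
  congr 1
  induction n with
  | zero => simp
  | succ k ih => rw [Finset.sum_Icc_succ_top (by omega), Finset.sum_range_succ, ih]

theorem avg_le {u : ℕ → ℂ} {n : ℕ} {ε : ℝ} (hε : 0 ≤ ε) (hu : ∀ i < n, ‖u i‖ ≤ ε) :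
    ‖(n : ℂ)⁻¹ * ∑ i ∈ Finset.range n, u i‖ ≤ ε := by
  rcases Nat.eq_zero_or_pos n with rfl | hn
  · simpa using hε
  have h1 : ‖∑ i ∈ Finset.range n, u i‖ ≤ n * ε := by
    refine (norm_sum_le _ _).trans ?_
    refine (Finset.sum_le_sum fun i hi => hu i (Finset.mem_range.1 hi)).trans ?_
    simp
  have hn' : (0:ℝ) < n := by exact_mod_cast hn
  rw [norm_mul, norm_inv, Complex.norm_natCast, inv_mul_le_iff₀ hn']
  exact h1

/-- Pointwise small averages of a nonnegative function force uniformly small averages. -/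
theorem uniform_averages {K : Set ℂ} (hK : IsCompact K) {T : ℂ → ℂ} (hT : ContinuousOn T K)
    (hTm : MapsTo T K K) {g : ℂ → ℝ} (hg : ContinuousOn g K) {M : ℝ} (hM : 0 ≤ M)
    (hgM : ∀ z ∈ K, g z ≤ M) {ε : ℝ} (hε : 0 ≤ ε)
    (hpt : ∀ z ∈ K, ∃ n : ℕ, 1 ≤ n ∧ ∑ i ∈ Finset.range n, g (T^[i + 1] z) < n * ε) :
    ∃ C : ℝ, ∀ n : ℕ, ∀ z ∈ K, ∑ i ∈ Finset.range n, g (T^[i + 1] z) ≤ n * ε + C := by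
  have hmn : ∀ n, MapsTo (T^[n]) K K := fun n => hTm.iterate n
  have hL : ∃ L : ℕ, ∀ z ∈ K, ∃ n : ℕ, 1 ≤ n ∧ n ≤ L ∧
      ∑ i ∈ Finset.range n, g (T^[i + 1] z) ≤ n * ε := by
    refine hK.induction_on (p := fun s => ∃ L : ℕ, ∀ z ∈ s, ∃ n : ℕ, 1 ≤ n ∧ n ≤ L ∧
      ∑ i ∈ Finset.range n, g (T^[i + 1] z) ≤ n * ε) ⟨0, by simp⟩ ?_ ?_ ?_
    · rintro s t hst ⟨L, hL⟩
      exact ⟨L, fun z hz => hL z (hst hz)⟩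
    · rintro s t ⟨L, hL⟩ ⟨L', hL'⟩
      refine ⟨max L L', ?_⟩
      rintro z (hz | hz)
      · obtain ⟨n, h1, h2, h3⟩ := hL z hz
        exact ⟨n, h1, h2.trans (le_max_left _ _), h3⟩
      · obtain ⟨n, h1, h2, h3⟩ := hL' z hz
        exact ⟨n, h1, h2.trans (le_max_right _ _), h3⟩
    · intro z hz
      obtain ⟨n, h1, h2⟩ := hpt z hz
      have hc : ContinuousOn (fun z => ∑ i ∈ Finset.range n, g (T^[i + 1] z)) K :=
        continuousOn_finsetSum _ fun i _ => hg.comp (hT.iterate hTm (i + 1)) (hmn _)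
      have hev := (hc z hz).tendsto.eventually (gt_mem_nhds h2)
      exact ⟨_, hev, n, fun w hw => ⟨n, h1, le_rfl, le_of_lt hw⟩⟩
  obtain ⟨L, hL⟩ := hL
  refine ⟨L * M, fun n => ?_⟩
  induction n using Nat.strong_induction_on with
  | _ n ih =>
    intro z hz
    rcases le_or_gt n L with hn | hn
    · have : ∑ i ∈ Finset.range n, g (T^[i + 1] z) ≤ n * M := by
        refine (Finset.sum_le_sum fun i _ => hgM _ (hmn _ hz)).trans ?_
        simp
      have h2 : (n:ℝ) * M ≤ L * M := mul_le_mul_of_nonneg_right (by exact_mod_cast hn) hM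
      have h3 : (0:ℝ) ≤ n * ε := by positivity
      linarith
    · obtain ⟨k, hk1, hk2, hk3⟩ := hL z hz
      obtain ⟨m, rfl⟩ : ∃ m, n = k + m := ⟨n - k, by omega⟩
      rw [Finset.sum_range_add]
      have h := ih m (by omega) (T^[k] z) (hmn k hz)
      have h' : ∑ i ∈ Finset.range m, g (T^[k + i + 1] z)
          = ∑ i ∈ Finset.range m, g (T^[i + 1] (T^[k] z)) := by
        refine Finset.sum_congr rfl fun i _ => ?_
        rw [← Function.iterate_add_apply]
        congr 2
        omega
      rw [h']
      push_cast
      linarith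

theorem density_iff (J : Set ℕ) : HasDensityOne J ↔
    Tendsto (fun N : ℕ => (((Finset.range N).filter (fun i => i + 1 ∉ J)).card : ℝ) / N)
      atTop (𝓝 0) := by
  have hcount : ∀ N : ℕ, (((Finset.range (N + 1)).filter (fun n => n ∈ J)).card : ℝ)
      + ((Finset.range N).filter (fun i => i + 1 ∉ J)).card = N + (if 0 ∈ J then 1 else 0) := by
    intro N
    simp only [Finset.card_filter]
    push_cast
    induction N with
    | zero => rw [Finset.sum_range_one, Finset.sum_range_zero]; push_cast; ring
    | succ k ih =>
      rw [Finset.sum_range_succ _ (k + 1), Finset.sum_range_succ (fun x => if x + 1 ∉ J then (1:ℝ) else 0) k]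
      push_cast
      by_cases h : k + 1 ∈ J
      · simp only [h, if_true, not_true, if_false]
        linarith
      · simp only [h, if_false, not_false_iff, if_true]
        linarith
  have hb : Tendsto (fun N : ℕ => (1:ℝ) + (if 0 ∈ J then (1:ℝ) else 0) / N) atTop (𝓝 1) := by
    simpa using (tendsto_const_nhds (x := (1:ℝ))).add
      (tendsto_const_div_atTop_nhds_zero_nat (if 0 ∈ J then (1:ℝ) else 0))
  have hev : ∀ᶠ N : ℕ in atTop,
      (((Finset.range (N + 1)).filter (fun n => n ∈ J)).card : ℝ) / N =
      ((1:ℝ) + (if 0 ∈ J then (1:ℝ) else 0) / N)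
        - (((Finset.range N).filter (fun i => i + 1 ∉ J)).card : ℝ) / N := by
    filter_upwards [eventually_gt_atTop 0] with N hN
    have hN' : (N:ℝ) ≠ 0 := by positivity
    have := hcount N
    rw [eq_sub_iff_add_eq, ← add_div, this, add_div, div_self hN']
  unfold HasDensityOne
  rw [tendsto_congr' hev]
  constructor
  · intro h
    have := hb.sub h
    simpa using this
  · intro h
    have := hb.sub h
    simpa using this

theorem small_avg_of_density {x : ℕ → ℂ} {K : Set ℂ} (hxK : ∀ n, x n ∈ K) {g : ℂ → ℝ}
    {M : ℝ} (hM : 0 ≤ M) (hgM : ∀ z ∈ K, g z ≤ M) {U : Set ℂ} {ε : ℝ} (hε : 0 < ε)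
    (hU : ∀ z ∈ K, z ∈ U → g z ≤ ε / 2) (hd : HasDensityOne {n | x n ∈ U}) :
    ∃ n : ℕ, 1 ≤ n ∧ ∑ i ∈ Finset.range n, g (x (i + 1)) < n * ε := by
  rw [density_iff] at hd
  have hd2 := hd.const_mul M
  rw [mul_zero] at hd2
  obtain ⟨n, hn1, hn⟩ := ((hd2.eventually (gt_mem_nhds (half_pos hε))).and
    (eventually_ge_atTop 1)).exists
  refine ⟨n, hn, ?_⟩
  have hn' : (0:ℝ) < n := by exact_mod_cast hn
  have h1 : ∑ i ∈ Finset.range n, g (x (i + 1)) ≤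
      ∑ i ∈ Finset.range n, (ε / 2 + M * (if x (i + 1) ∉ U then 1 else 0)) := by
    refine Finset.sum_le_sum fun i _ => ?_
    by_cases h : x (i + 1) ∈ U
    · simpa [h] using hU _ (hxK _) h
    · simp only [h, not_false_iff, if_true]
      linarith [hgM _ (hxK (i + 1))]
  rw [Finset.sum_add_distrib, ← Finset.mul_sum, Finset.sum_boole] at h1
  rw [mul_div_assoc', div_lt_iff₀ hn'] at hn1
  simp at h1
  simp at hn1
  linarith

theorem ces_real {u : ℕ → ℝ} {l : ℝ} (h : Tendsto u atTop (𝓝 l)) :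
    Tendsto (fun n : ℕ => (n : ℝ)⁻¹ * ∑ i ∈ Finset.range n, u (i + 1)) atTop (𝓝 l) :=
  (h.comp (tendsto_add_atTop_nat 1)).cesaro

/-- Density condition implies mean ergodicity. -/
theorem ergodic_of_density {φ : ℂ → ℂ} (hφa : IsDiscAlg φ)
    (hφm : MapsTo φ (closedBall (0:ℂ) 1) (closedBall (0:ℂ) 1)) {z₀ : ℂ} (h1 : ‖z₀‖ = 1)
    (hloc : ∀ z, ‖z‖ < 1 → Tendsto (fun n => φ^[n] z) atTop (𝓝 z₀))
    (hden : ∀ z : ℂ, ‖z‖ = 1 → ∀ U ∈ 𝓝 z₀, HasDensityOne {n : ℕ | φ^[n] z ∈ U}) :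
    MeanErgodicDiscAlg φ := by
  intro f hf
  refine ⟨fun _ => f z₀, ?_⟩
  have hmn : ∀ n, MapsTo (φ^[n]) (closedBall 0 1) (closedBall 0 1) := fun n => hφm.iterate n
  have hz₀ : z₀ ∈ closedBall (0:ℂ) 1 := by simp [h1]
  have hK := isCompact_closedBall (0:ℂ) 1
  set g : ℂ → ℝ := fun w => ‖f w - f z₀‖ with hg
  have hgc : ContinuousOn g (closedBall 0 1) := (hf.1.sub continuousOn_const).norm
  obtain ⟨M, hM⟩ := hK.exists_bound_of_continuousOn hgc
  have hM0 : 0 ≤ M := (norm_nonneg _).trans (hM z₀ hz₀)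
  have hgM : ∀ z ∈ closedBall (0:ℂ) 1, g z ≤ M := fun z hz => (le_abs_self _).trans (hM z hz)
  have hg0 : g z₀ = 0 := by simp [hg]
  rw [Metric.tendstoUniformlyOn_iff]
  intro ε hε
  have hε2 : 0 < ε / 2 := by positivity
  obtain ⟨C, hC⟩ := uniform_averages hK hφa.1 hφm hgc hM0 hgM hε2.le (by
    intro z hz
    rcases (mem_closedBall_zero_iff.1 hz).lt_or_eq with hlt | heq
    · have h2 : Tendsto (fun n => g (φ^[n] z)) atTop (𝓝 0) := by
        rw [← hg0]
        refine (hgc z₀ hz₀).tendsto.comp (tendsto_nhdsWithin_iff.2 ⟨hloc z hlt, ?_⟩)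
        exact Eventually.of_forall fun n => hmn n hz
      obtain ⟨n, hn1, hn⟩ := (((ces_real h2).eventually (gt_mem_nhds hε2)).and
        (eventually_ge_atTop 1)).exists
      refine ⟨n, hn, ?_⟩
      rwa [inv_mul_lt_iff₀ (by exact_mod_cast hn)] at hn1
    · have h2 : ∀ᶠ w in 𝓝 z₀, w ∈ closedBall (0:ℂ) 1 → g w < ε / 2 / 2 := by
        have := (hgc z₀ hz₀).tendsto.eventually
          (gt_mem_nhds (show g z₀ < ε / 2 / 2 by rw [hg0]; positivity))
        exact eventually_nhdsWithin_iff.1 this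
      exact small_avg_of_density (x := fun n => φ^[n] z)
        (U := {w | w ∈ closedBall (0:ℂ) 1 → g w < ε / 2 / 2}) (fun n => hmn n hz) hM0 hgM hε2
        (fun w hw hwU => le_of_lt ((mem_ofPred_eq ▸ hwU) hw)) (hden z heq _ h2))
  have hlim : Tendsto (fun n : ℕ => C / n) atTop (𝓝 0) := tendsto_const_div_atTop_nhds_zero_nat C
  filter_upwards [hlim.eventually (gt_mem_nhds hε2), eventually_ge_atTop 1] with n hn hn1 z hz
  have hn' : (0:ℝ) < n := by exact_mod_cast hn1
  have hnc : (n:ℂ) ≠ 0 := by exact_mod_cast hn'.ne'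
  rw [dist_comm, dist_eq_norm, cesaro_eq]
  have h2 : (n:ℂ)⁻¹ * ∑ i ∈ Finset.range n, f (φ^[i + 1] z) - f z₀
      = (n:ℂ)⁻¹ * ∑ i ∈ Finset.range n, (f (φ^[i + 1] z) - f z₀) := by
    rw [Finset.sum_sub_distrib]
    simp
    field_simp
  rw [h2, norm_mul, norm_inv, Complex.norm_natCast, inv_mul_lt_iff₀ hn']
  refine (norm_sum_le _ _).trans_lt ((hC n z hz).trans_lt ?_)
  rw [div_lt_iff₀ hn'] at hn
  linarith

/-- With a boundary Denjoy–Wolff point, limits of Cesàro means are evaluations. -/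
theorem cesaro_limit_interior {φ f : ℂ → ℂ} (hf : IsDiscAlg f)
    (hφm : MapsTo φ (closedBall (0:ℂ) 1) (closedBall (0:ℂ) 1)) {z₀ : ℂ} (h1 : ‖z₀‖ = 1)
    (hloc : ∀ z, ‖z‖ < 1 → Tendsto (fun n => φ^[n] z) atTop (𝓝 z₀)) {z : ℂ} (hz : ‖z‖ < 1) :
    Tendsto (fun n => cesaro φ f n z) atTop (𝓝 (f z₀)) := by
  have hz₀ : z₀ ∈ closedBall (0:ℂ) 1 := by simp [h1]
  have h2 : Tendsto (fun n => f (φ^[n] z)) atTop (𝓝 (f z₀)) := by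
    refine (hf.1 z₀ hz₀).tendsto.comp (tendsto_nhdsWithin_iff.2 ⟨hloc z hz, ?_⟩)
    exact Eventually.of_forall fun n => hφm.iterate n (by simpa using hz.le)
  have h3 := (h2.comp (tendsto_add_atTop_nat 1)).cesaro_smul
  refine h3.congr fun n => ?_
  rw [cesaro_eq]
  simp [Function.comp_def]

theorem density_of_ergodic {φ : ℂ → ℂ} (hφa : IsDiscAlg φ)
    (hφm : MapsTo φ (closedBall (0:ℂ) 1) (closedBall (0:ℂ) 1)) {z₀ : ℂ} (h1 : ‖z₀‖ = 1)
    (hloc : ∀ z, ‖z‖ < 1 → Tendsto (fun n => φ^[n] z) atTop (𝓝 z₀))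
    (hE : MeanErgodicDiscAlg φ) :
    ∀ z : ℂ, ‖z‖ = 1 → ∀ U ∈ 𝓝 z₀, HasDensityOne {n : ℕ | φ^[n] z ∈ U} := by
  intro z hz U hU
  have hmn : ∀ n, MapsTo (φ^[n]) (closedBall 0 1) (closedBall 0 1) := fun n => hφm.iterate n
  have hzK : z ∈ closedBall (0:ℂ) 1 := by simp [hz]
  set f : ℂ → ℂ := fun w => (starRingEnd ℂ) z₀ * w with hfdef
  have hf : IsDiscAlg f := ⟨by fun_prop, by fun_prop⟩
  obtain ⟨g, hg⟩ := hE f hf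
  have hfz : f z₀ = 1 := by
    simp only [hfdef]
    rw [mul_comm, Complex.mul_conj, Complex.normSq_eq_norm_sq, h1]; simp
  have hcc : ∀ n, ContinuousOn (cesaro φ f n) (closedBall 0 1) := by
    intro n
    unfold cesaro
    refine continuousOn_const.mul (continuousOn_finsetSum _ fun i _ => ?_)
    exact hf.1.comp (hφa.1.iterate hφm i) (hmn i)
  have hgc : ContinuousOn g (closedBall 0 1) :=
    hg.continuousOn (Eventually.of_forall hcc).frequently
  have hgb : EqOn g (fun _ => 1) (ball 0 1) := by
    intro w hw
    have h2 := cesaro_limit_interior hf hφm h1 hloc (by simpa using hw)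
    rw [hfz] at h2
    exact tendsto_nhds_unique (hg.tendsto_at (ball_subset_closedBall hw)) h2
  have hgz : g z = 1 :=
    hgb.of_subset_closure hgc continuousOn_const ball_subset_closedBall
      (by rw [closure_ball (0:ℂ) one_ne_zero]) hzK
  have hlim := hg.tendsto_at hzK
  rw [hgz] at hlim
  have hre : Tendsto (fun n => 1 - (cesaro φ f n z).re) atTop (𝓝 0) := by
    have := (Complex.continuous_re.tendsto 1).comp hlim
    simpa using (tendsto_const_nhds (x := (1:ℝ))).sub this
  obtain ⟨δ, hδ, hball⟩ := Metric.mem_nhds_iff.1 hU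
  rw [density_iff]
  have hk : ∀ w : ℂ, ‖w‖ ≤ 1 → ‖w - z₀‖ ^ 2 ≤ 2 * (1 - (f w).re) := by
    intro w hw
    have h2 : ‖w - z₀‖ ^ 2 = ‖w‖ ^ 2 + ‖z₀‖ ^ 2 - 2 * (f w).re := by
      simp only [hfdef, Complex.sq_norm, Complex.normSq_apply]
      simp
      ring
    rw [h2, h1]
    nlinarith [norm_nonneg w]
  have hup : Tendsto (fun n => 2 / δ ^ 2 * (1 - (cesaro φ f n z).re)) atTop (𝓝 0) := by
    simpa using hre.const_mul (2 / δ ^ 2)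
  refine tendsto_of_tendsto_of_tendsto_of_le_of_le' tendsto_const_nhds hup
    (Eventually.of_forall fun n => by positivity) ?_
  filter_upwards [eventually_ge_atTop 1] with n hn
  have hn' : (0:ℝ) < n := by exact_mod_cast hn
  have e1 : (cesaro φ f n z).re = (n:ℝ)⁻¹ * ∑ i ∈ Finset.range n, (f (φ^[i + 1] z)).re := by
    rw [cesaro_eq, ← Complex.re_sum, ← Complex.re_ofReal_mul]
    simp
  have e2 : 1 - (cesaro φ f n z).re
      = (n:ℝ)⁻¹ * ∑ i ∈ Finset.range n, (1 - (f (φ^[i + 1] z)).re) := by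
    rw [e1, Finset.sum_sub_distrib]
    simp
    field_simp
  have e3 : ∑ i ∈ Finset.range n, (δ ^ 2 / 2 * (if φ^[i + 1] z ∉ U then 1 else 0))
      ≤ ∑ i ∈ Finset.range n, (1 - (f (φ^[i + 1] z)).re) := by
    refine Finset.sum_le_sum fun i _ => ?_
    have h3 := hk _ (mem_closedBall_zero_iff.1 (hmn (i + 1) hzK))
    by_cases h : φ^[i + 1] z ∈ U
    · simp only [h, not_true, if_false]
      nlinarith [sq_nonneg ‖φ^[i + 1] z - z₀‖]
    · simp only [h, not_false_iff, if_true]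
      have h4 : δ ≤ ‖φ^[i + 1] z - z₀‖ := by
        by_contra hlt
        exact h (hball (by rw [mem_ball, dist_eq_norm]; exact not_le.1 hlt))
      nlinarith [pow_le_pow_left₀ hδ.le h4 2]
  rw [← Finset.mul_sum, Finset.sum_boole] at e3
  rw [e2]
  have e4 : (({i ∈ Finset.range n | φ^[i + 1] z ∉ U}.card : ℕ) : ℝ)
      ≤ 2 / δ ^ 2 * ∑ i ∈ Finset.range n, (1 - (f (φ^[i + 1] z)).re) := by
    have := mul_le_mul_of_nonneg_left e3 (show 0 ≤ 2 / δ ^ 2 by positivity)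
    refine le_trans (le_of_eq ?_) this
    field_simp
  rw [div_le_iff₀ hn']
  refine le_trans (le_of_eq ?_) (e4.trans (le_of_eq ?_))
  · rfl
  · field_simp

theorem geom_avg {μ : ℂ} (hμ : ‖μ‖ = 1) :
    Tendsto (fun n : ℕ => (n : ℂ)⁻¹ * ∑ i ∈ Finset.range n, μ ^ (i + 1)) atTop
      (𝓝 (if μ = 1 then 1 else 0)) := by
  by_cases h : μ = 1
  · simp only [h, if_true]
    refine (tendsto_const_nhds (x := (1:ℂ))).congr' ?_
    filter_upwards [eventually_ge_atTop 1] with n hn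
    have : (n:ℂ) ≠ 0 := by exact_mod_cast (by omega : n ≠ 0)
    simp [this]
  · simp only [h, if_false]
    have h1 : 0 < ‖μ - 1‖ := norm_pos_iff.2 (sub_ne_zero.2 h)
    have hlim : Tendsto (fun n : ℕ => (2 / ‖μ - 1‖) / n) atTop (𝓝 0) :=
      tendsto_const_div_atTop_nhds_zero_nat _
    refine squeeze_zero_norm (fun n => ?_) hlim
    have h2 : ∑ i ∈ Finset.range n, μ ^ (i + 1) = μ * ((μ ^ n - 1) / (μ - 1)) := by
      rw [← geom_sum_eq h, Finset.mul_sum]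
      exact Finset.sum_congr rfl fun i _ => by ring
    rw [h2, norm_mul, norm_inv, norm_mul, hμ, norm_div, Complex.norm_natCast, one_mul,
      inv_mul_eq_div]
    have h3 : ‖μ ^ n - 1‖ ≤ 2 := by
      refine (norm_sub_le _ _).trans ?_
      simp [hμ]
      norm_num
    gcongr

theorem exists_unif_limit {F : ℕ → ℂ → ℂ} {s : Set ℂ} (h : UniformCauchySeqOn F atTop s) :
    ∃ g : ℂ → ℂ, TendstoUniformlyOn F g atTop s := by
  have hp : ∀ z, ∃ l, z ∈ s → Tendsto (fun n => F n z) atTop (𝓝 l) := by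
    intro z
    by_cases hz : z ∈ s
    · obtain ⟨l, hl⟩ := cauchySeq_tendsto_of_complete (h.cauchySeq hz)
      exact ⟨l, fun _ => hl⟩
    · exact ⟨0, fun h => absurd h hz⟩
  choose g hg using hp
  exact ⟨g, h.tendstoUniformlyOn_of_tendsto hg⟩

theorem poly_dense {F : ℂ → ℂ} (hF : IsDiscAlg F) {ε : ℝ} (hε : 0 < ε) :
    ∃ (d : ℕ) (a : ℕ → ℂ), ∀ w ∈ closedBall (0:ℂ) 1,
      ‖F w - ∑ k ∈ Finset.range d, a k * w ^ k‖ ≤ ε := by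
  have huc := (isCompact_closedBall (0:ℂ) 1).uniformContinuousOn_of_continuous hF.1
  rw [Metric.uniformContinuousOn_iff] at huc
  obtain ⟨δ, hδ, huc⟩ := huc (ε / 2) (by positivity)
  -- a radius below one
  obtain ⟨r, hr0, hr1, hrδ⟩ : ∃ r : ℝ, 0 < r ∧ r < 1 ∧ 1 - r < δ := by
    refine ⟨max (1 / 2) (1 - δ / 2), by positivity, ?_, ?_⟩
    · rw [max_lt_iff]; constructor <;> linarith
    · linarith [le_max_right (1 / 2 : ℝ) (1 - δ / 2)]
  obtain ⟨s, hrs, hs1⟩ := exists_between hr1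
  obtain ⟨t, hst, ht1⟩ := exists_between hs1
  have hs0 : 0 < s := hr0.trans hrs
  have ht0 : 0 < t := hs0.trans hst
  lift s to NNReal using hs0.le
  lift t to NNReal using ht0.le
  have hps := DifferentiableOn.hasFPowerSeriesOnBall (R := t) (c := (0:ℂ)) (f := F)
    (hF.2.mono (closedBall_subset_ball ht1)) (by exact_mod_cast ht0)
  have htu := hps.tendstoUniformlyOn (r' := s) (by exact_mod_cast hst)
  rw [Metric.tendstoUniformlyOn_iff] at htu
  obtain ⟨d, hd⟩ := (htu (ε / 2) (by positivity)).exists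
  set p := cauchyPowerSeries F 0 t
  refine ⟨d, fun k => p.coeff k * r ^ k, fun w hw => ?_⟩
  have hw1 := mem_closedBall_zero_iff.1 hw
  have hrw : ‖(r:ℂ) * w‖ ≤ r := by
    rw [norm_mul, Complex.norm_real, Real.norm_of_nonneg hr0.le]
    nlinarith
  have h1 := hd (r * w) (by rw [mem_ball_zero_iff]; linarith)
  have h2 := huc w hw (r * w) (by rw [mem_closedBall_zero_iff]; linarith) (by
    rw [dist_eq_norm]
    have : w - r * w = ((1 - r : ℝ) : ℂ) * w := by push_cast; ring
    rw [this, norm_mul, Complex.norm_real, Real.norm_of_nonneg (by linarith)]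
    nlinarith [norm_nonneg w])
  have h3 : p.partialSum d (r * w) = ∑ k ∈ Finset.range d, p.coeff k * r ^ k * w ^ k := by
    unfold FormalMultilinearSeries.partialSum
    refine Finset.sum_congr rfl fun k _ => ?_
    rw [FormalMultilinearSeries.apply_eq_pow_smul_coeff]
    simp only [smul_eq_mul]
    ring
  rw [h3, zero_add, dist_eq_norm] at h1
  rw [dist_eq_norm] at h2
  have := norm_add_le (F w - F (r * w))
    (F (r * w) - ∑ k ∈ Finset.range d, p.coeff k * r ^ k * w ^ k)
  rw [sub_add_sub_cancel] at this
  linarith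

theorem rot_ergodic {l : ℂ} (hl : ‖l‖ = 1) {F : ℂ → ℂ} (hF : IsDiscAlg F) :
    ∃ g : ℂ → ℂ, TendstoUniformlyOn
      (fun (n : ℕ) (w : ℂ) => (n : ℂ)⁻¹ * ∑ i ∈ Finset.range n, F (l ^ (i + 1) * w)) g atTop
      (closedBall (0:ℂ) 1) := by
  apply exists_unif_limit
  rw [Metric.uniformCauchySeqOn_iff]
  intro ε hε
  obtain ⟨d, a, hP⟩ := poly_dense hF (show 0 < ε / 8 by positivity)
  have hlk : ∀ k : ℕ, ‖l ^ k‖ = 1 := fun k => by simp [hl]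
  set c : ℕ → ℕ → ℂ := fun k n => (n : ℂ)⁻¹ * ∑ i ∈ Finset.range n, (l ^ k) ^ (i + 1) with hc
  set L : ℕ → ℂ := fun k => if l ^ k = 1 then 1 else 0 with hL
  have hsum : Tendsto (fun n => ∑ k ∈ Finset.range d, ‖a k‖ * ‖c k n - L k‖) atTop (𝓝 0) := by
    rw [show (0:ℝ) = ∑ k ∈ Finset.range d, ‖a k‖ * ‖L k - L k‖ by simp]
    refine tendsto_finsetSum _ fun k _ => ?_
    exact (((geom_avg (hlk k)).sub_const _).norm).const_mul _
  obtain ⟨N, hN⟩ := eventually_atTop.1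
    (hsum.eventually (gt_mem_nhds (show 0 < ε / 8 by positivity)))
  have hmain : ∀ n ≥ N, ∀ w ∈ closedBall (0:ℂ) 1,
      ‖(n : ℂ)⁻¹ * ∑ i ∈ Finset.range n, F (l ^ (i + 1) * w)
        - ∑ k ∈ Finset.range d, a k * w ^ k * L k‖ ≤ ε / 4 := by
    intro n hn w hw
    have hw1 := mem_closedBall_zero_iff.1 hw
    have e1 := avg_le (n := n) (ε := ε / 8)
      (u := fun i => F (l ^ (i + 1) * w)
        - ∑ k ∈ Finset.range d, a k * (l ^ (i + 1) * w) ^ k) (by positivity) (by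
        intro i _
        refine hP _ ?_
        rw [mem_closedBall_zero_iff, norm_mul, hlk, one_mul]
        exact hw1)
    have e2 : (n : ℂ)⁻¹ * ∑ i ∈ Finset.range n, ∑ k ∈ Finset.range d,
        a k * (l ^ (i + 1) * w) ^ k = ∑ k ∈ Finset.range d, a k * w ^ k * c k n := by
      rw [Finset.sum_comm, Finset.mul_sum]
      refine Finset.sum_congr rfl fun k _ => ?_
      simp only [hc, Finset.mul_sum]
      refine Finset.sum_congr rfl fun i _ => ?_
      rw [mul_pow, ← pow_mul, ← pow_mul, mul_comm (i + 1) k]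
      ring
    rw [Finset.sum_sub_distrib, mul_sub, e2] at e1
    have e3 : ‖∑ k ∈ Finset.range d, a k * w ^ k * c k n
        - ∑ k ∈ Finset.range d, a k * w ^ k * L k‖ ≤ ε / 8 := by
      rw [← Finset.sum_sub_distrib]
      refine (norm_sum_le _ _).trans ((Finset.sum_le_sum fun k _ => ?_).trans (hN n hn).le)
      rw [← mul_sub, norm_mul, norm_mul, norm_pow]
      have : ‖w‖ ^ k ≤ 1 := pow_le_one₀ (norm_nonneg _) hw1
      have h0 := norm_nonneg (a k)
      have h00 := norm_nonneg (c k n - L k)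
      refine mul_le_mul_of_nonneg_right ?_ h00
      nlinarith
    have := norm_add_le ((n : ℂ)⁻¹ * ∑ i ∈ Finset.range n, F (l ^ (i + 1) * w)
      - ∑ k ∈ Finset.range d, a k * w ^ k * c k n) (∑ k ∈ Finset.range d, a k * w ^ k * c k n
        - ∑ k ∈ Finset.range d, a k * w ^ k * L k)
    rw [sub_add_sub_cancel] at this
    linarith
  refine ⟨N, fun m hm n hn w hw => ?_⟩
  have h1 := hmain m hm w hw
  have h2 := hmain n hn w hw
  have := dist_triangle_right ((m : ℂ)⁻¹ * ∑ i ∈ Finset.range m, F (l ^ (i + 1) * w))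
    ((n : ℂ)⁻¹ * ∑ i ∈ Finset.range n, F (l ^ (i + 1) * w))
    (∑ k ∈ Finset.range d, a k * w ^ k * L k)
  rw [dist_eq_norm (_ * _) (∑ k ∈ Finset.range d, a k * w ^ k * L k),
    dist_eq_norm (_ * _) (∑ k ∈ Finset.range d, a k * w ^ k * L k)] at this
  linarith

theorem rot_closed {φ : ℂ → ℂ} (hφa : IsDiscAlg φ)
    (hφm : MapsTo φ (closedBall (0:ℂ) 1) (closedBall (0:ℂ) 1)) {a l : ℂ} (ha : ‖a‖ < 1)
    (hrot : ∀ w, ‖w‖ < 1 → mob a (φ w) = l * mob a w) :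
    ∀ (n : ℕ), ∀ w ∈ closedBall (0:ℂ) 1, mob a (φ^[n] w) = l ^ n * mob a w := by
  have h1 : EqOn (fun w => mob a (φ w)) (fun w => l * mob a w) (closedBall 0 1) := by
    have hb : EqOn (fun w => mob a (φ w)) (fun w => l * mob a w) (ball 0 1) :=
      fun w hw => hrot w (by simpa using hw)
    refine hb.of_subset_closure ((mob_continuousOn ha).comp hφa.1 hφm)
      (continuousOn_const.mul (mob_continuousOn ha)) ball_subset_closedBall ?_
    rw [closure_ball (0:ℂ) one_ne_zero]
  intro n
  induction n with
  | zero => intro w _; simp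
  | succ k ih =>
    intro w hw
    rw [Function.iterate_succ_apply']
    have := h1 (hφm.iterate k hw)
    simp only at this
    rw [this, ih w hw]
    ring

theorem elliptic_ergodic {φ : ℂ → ℂ}
    {a l : ℂ} (ha : ‖a‖ < 1) (hl : ‖l‖ = 1)
    (hφm : MapsTo φ (closedBall (0:ℂ) 1) (closedBall (0:ℂ) 1))
    (hrot : ∀ (n : ℕ), ∀ w ∈ closedBall (0:ℂ) 1, mob a (φ^[n] w) = l ^ n * mob a w) :
    MeanErgodicDiscAlg φ := by
  intro f hf
  have hF : IsDiscAlg (fun w => f (mob a w)) :=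
    ⟨hf.1.comp (mob_continuousOn ha) (mob_mapsTo' ha),
      hf.2.comp (mob_differentiableOn ha) (mob_mapsTo ha)⟩
  obtain ⟨g, hg⟩ := rot_ergodic hl hF
  refine ⟨fun z => g (mob a z), ?_⟩
  have h1 := (hg.comp (mob a)).mono (s' := closedBall 0 1) (mob_mapsTo' ha)
  refine h1.congr (Eventually.of_forall fun n z hz => ?_)
  simp only [Function.comp, cesaro_eq]
  congr 1
  refine Finset.sum_congr rfl fun i _ => ?_
  rw [← hrot _ z hz, mob_mob ha (mem_closedBall_zero_iff.1 (hφm.iterate _ hz))]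

theorem elliptic_of_rot {φ : ℂ → ℂ} (hφa : IsDiscAlg φ)
    (hφb : MapsTo φ (ball (0:ℂ) 1) (ball (0:ℂ) 1)) {a l : ℂ} (ha : ‖a‖ < 1) (hl : ‖l‖ = 1)
    (hfix : φ a = a) (hrot : ∀ w, ‖w‖ < 1 → mob a (φ w) = l * mob a w) :
    IsEllipticAutomorphism φ := by
  have hl0 : l ≠ 0 := by rintro rfl; simp at hl
  have hr : MapsTo (fun w => l⁻¹ * mob a w) (ball 0 1) (ball 0 1) := by
    intro w hw
    have := mob_mapsTo ha hw
    rw [mem_ball_zero_iff] at *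
    simpa [hl] using this
  refine ⟨⟨hφa.2, hφb, fun w => mob a (l⁻¹ * mob a w), ?_, ?_, ?_, ?_⟩, a, by simpa using ha, hfix⟩
  · exact (mob_differentiableOn ha).comp ((mob_differentiableOn ha).const_mul _) hr
  · exact (mob_mapsTo ha).comp hr
  · intro z hz
    have hz1 : ‖z‖ < 1 := by simpa using hz
    simp only
    rw [hrot z hz1, inv_mul_cancel_left₀ hl0, mob_mob ha hz1.le]
  · intro z hz
    have hz1 : ‖z‖ < 1 := by simpa using hz
    have hb := hr hz
    have hb1 : ‖l⁻¹ * mob a z‖ < 1 := by simpa using hb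
    have hy1 := mob_norm_lt ha hb1
    have hφy : ‖φ (mob a (l⁻¹ * mob a z))‖ < 1 := by
      simpa using hφb (mem_ball_zero_iff.2 hy1)
    rw [← mob_mob ha hφy.le, hrot _ hy1, mob_mob ha hb1.le, mul_inv_cancel_left₀ hl0,
      mob_mob ha hz1.le]

theorem ergodic_of_unif {φ : ℂ → ℂ} (h : UnifMeanErgodicDiscAlg φ) : MeanErgodicDiscAlg φ := by
  obtain ⟨P, hP⟩ := h
  intro f hf
  obtain ⟨M, hM⟩ := (isCompact_closedBall (0:ℂ) 1).exists_bound_of_continuousOn hf.1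
  set C : ℝ := max M 1 with hC
  have hC0 : 0 < C := lt_of_lt_of_le one_pos (le_max_right _ _)
  have hCc : (C:ℂ) ≠ 0 := by exact_mod_cast hC0.ne'
  set f' : ℂ → ℂ := fun z => (C:ℂ)⁻¹ * f z with hf'
  have hfd : IsDiscAlg f' := ⟨continuousOn_const.mul hf.1, hf.2.const_mul _⟩
  have hfb : ∀ z ∈ closedBall (0:ℂ) 1, ‖f' z‖ ≤ 1 := by
    intro z hz
    simp only [hf', norm_mul, norm_inv, Complex.norm_real, Real.norm_of_nonneg hC0.le]
    rw [inv_mul_le_iff₀ hC0, mul_one]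
    exact (hM z hz).trans (le_max_left _ _)
  refine ⟨fun z => C * P f' z, ?_⟩
  rw [Metric.tendstoUniformlyOn_iff]
  intro ε hε
  obtain ⟨N, hN⟩ := hP (ε / (2 * C)) (by positivity)
  filter_upwards [eventually_ge_atTop N] with n hn z hz
  have h1 := hN n hn f' hfd hfb z hz
  have h2 : cesaro φ f n z = C * cesaro φ f' n z := by
    simp only [cesaro, hf', ← Finset.mul_sum]
    field_simp
  rw [dist_comm, dist_eq_norm, h2, ← mul_sub, norm_mul, Complex.norm_real,
    Real.norm_of_nonneg hC0.le]
  have h3 : C * ‖cesaro φ f' n z - P f' z‖ ≤ C * (ε / (2 * C)) :=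
    mul_le_mul_of_nonneg_left h1 hC0.le
  have h4 : C * (ε / (2 * C)) = ε / 2 := by field_simp
  linarith

theorem unif_of_periodic {φ : ℂ → ℂ}
    (hφm : MapsTo φ (closedBall (0:ℂ) 1) (closedBall (0:ℂ) 1)) {k : ℕ} (hk : 0 < k)
    (hper : ∀ z ∈ closedBall (0:ℂ) 1, φ^[k] z = z) : UnifMeanErgodicDiscAlg φ := by
  refine ⟨fun f z => cesaro φ f k z, fun ε hε => ?_⟩
  have hkR : (0:ℝ) < k := by exact_mod_cast hk
  have hlim : Tendsto (fun n : ℕ => (2 * k : ℝ) / n) atTop (𝓝 0) :=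
    tendsto_const_div_atTop_nhds_zero_nat _
  obtain ⟨N, hN⟩ := eventually_atTop.1
    ((hlim.eventually (gt_mem_nhds hε)).and (eventually_ge_atTop 1))
  refine ⟨N, fun n hn f hf hfb z hz => ?_⟩
  obtain ⟨hn1, hn2⟩ := hN n hn
  have hnR : (0:ℝ) < n := by exact_mod_cast hn2
  have hnC : (n:ℂ) ≠ 0 := by exact_mod_cast hnR.ne'
  have hkC : (k:ℂ) ≠ 0 := by exact_mod_cast hkR.ne'
  set S : ℕ → ℂ := fun n => ∑ i ∈ Finset.range n, f (φ^[i + 1] z) with hS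
  have hSb : ∀ m, ‖S m‖ ≤ m := by
    intro m
    refine (norm_sum_le _ _).trans ?_
    refine (Finset.sum_le_sum fun i _ => hfb _ (hφm.iterate (i + 1) hz)).trans ?_
    simp
  have hSk : ∀ m, S (k + m) = S k + S m := by
    intro m
    simp only [hS, Finset.sum_range_add]
    congr 1
    refine Finset.sum_congr rfl fun i _ => ?_
    rw [show k + i + 1 = (i + 1) + k by omega, Function.iterate_add_apply, hper z hz]
  have hmain : ∀ m, ‖k * S m - m * S k‖ ≤ 2 * k * k := by
    intro m
    induction m using Nat.strong_induction_on with
    | _ m ih =>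
      rcases lt_or_ge m k with h | h
      · have h1 := hSb m
        have h2 := hSb k
        have h3 : (m:ℝ) ≤ k := by exact_mod_cast h.le
        refine (norm_sub_le _ _).trans ?_
        rw [norm_mul, norm_mul, Complex.norm_natCast, Complex.norm_natCast]
        have h4 : (k:ℝ) * ‖S m‖ ≤ k * k := mul_le_mul_of_nonneg_left (h1.trans h3) hkR.le
        have h5 : (m:ℝ) * ‖S k‖ ≤ k * k := mul_le_mul h3 h2 (norm_nonneg _) hkR.le
        linarith
      · obtain ⟨j, rfl⟩ : ∃ j, m = k + j := ⟨m - k, by omega⟩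
        have := ih j (by omega)
        rw [hSk]
        push_cast
        convert this using 2
        ring
  simp only [cesaro_eq]
  change ‖(n:ℂ)⁻¹ * S n - (k:ℂ)⁻¹ * S k‖ ≤ ε
  have h1 : (n:ℂ)⁻¹ * S n - (k:ℂ)⁻¹ * S k = (n * k : ℂ)⁻¹ * (k * S n - n * S k) := by
    field_simp
  rw [h1, norm_mul, norm_inv, norm_mul, Complex.norm_natCast, Complex.norm_natCast,
    inv_mul_le_iff₀ (by positivity)]
  rw [div_lt_iff₀ hnR] at hn1
  refine (hmain n).trans ?_
  nlinarith

/-- Powers of a unimodular number return close to one. -/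
theorem pow_near_one {l : ℂ} (hl : ‖l‖ = 1) {δ : ℝ} (hδ : 0 < δ) :
    ∃ j : ℕ, 0 < j ∧ ‖l ^ j - 1‖ < δ := by
  obtain ⟨p, -, ψ, hψ, hlim⟩ := (isCompact_closedBall (0:ℂ) 1).tendsto_subseq
    (x := fun n : ℕ => l ^ n) (fun n => by simp [hl])
  have hC := hlim.cauchySeq
  rw [Metric.cauchySeq_iff] at hC
  obtain ⟨N, hN⟩ := hC δ hδ
  have h1 := hN (N + 1) (by omega) N le_rfl
  have hlt : ψ N < ψ (N + 1) := hψ (by omega)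
  refine ⟨ψ (N + 1) - ψ N, by omega, ?_⟩
  rw [dist_eq_norm] at h1
  simp only [Function.comp] at h1
  have h2 : l ^ ψ (N + 1) - l ^ ψ N = l ^ ψ N * (l ^ (ψ (N + 1) - ψ N) - 1) := by
    rw [mul_sub, ← pow_add, mul_one, show ψ N + (ψ (N + 1) - ψ N) = ψ (N + 1) by omega]
  rw [h2, norm_mul, norm_pow, hl] at h1
  simpa using h1

theorem root_of_unif {φ : ℂ → ℂ} {a l : ℂ} (ha : ‖a‖ < 1) (hl : ‖l‖ = 1)
    (hrot : ∀ (n : ℕ), ∀ w ∈ closedBall (0:ℂ) 1, mob a (φ^[n] w) = l ^ n * mob a w)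
    (h : UnifMeanErgodicDiscAlg φ) : ∃ k : ℕ, 0 < k ∧ l ^ k = 1 := by
  by_contra hcon
  push Not at hcon
  obtain ⟨P, hP⟩ := h
  -- a boundary point where the eigenfunctions have modulus one
  set z : ℂ := mob a 1 with hz
  have hzK : z ∈ closedBall (0:ℂ) 1 := mob_mapsTo' ha (by simp)
  have hmz : mob a z = 1 := mob_mob ha (by simp)
  set f : ℕ → ℂ → ℂ := fun j w => (mob a w) ^ j with hf
  have hfd : ∀ j, IsDiscAlg (f j) := fun j =>
    ⟨(mob_continuousOn ha).pow j, (mob_differentiableOn ha).pow j⟩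
  have hfb : ∀ j, ∀ w ∈ closedBall (0:ℂ) 1, ‖f j w‖ ≤ 1 := by
    intro j w hw
    simp only [hf, norm_pow]
    exact pow_le_one₀ (norm_nonneg _) (mob_norm_le ha (by simpa using hw))
  have hces : ∀ j n, cesaro φ (f j) n z
      = (n:ℂ)⁻¹ * ∑ i ∈ Finset.range n, (l ^ j) ^ (i + 1) := by
    intro j n
    rw [cesaro_eq]
    congr 1
    refine Finset.sum_congr rfl fun i _ => ?_
    simp only [hf]
    rw [hrot _ z hzK, hmz, mul_one, ← pow_mul, ← pow_mul, mul_comm]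
  have hP0 : ∀ j, 0 < j → P (f j) z = 0 := by
    intro j hj
    have h1 : Tendsto (fun n => cesaro φ (f j) n z) atTop (𝓝 (P (f j) z)) := by
      rw [Metric.tendsto_atTop]
      intro ε hε
      obtain ⟨N, hN⟩ := hP (ε / 2) (by positivity)
      refine ⟨N, fun n hn => ?_⟩
      rw [dist_eq_norm]
      linarith [hN n hn (f j) (hfd j) (hfb j) z hzK]
    have h2 := geom_avg (μ := l ^ j) (by simp [hl])
    simp only [hcon j hj, if_false] at h2
    simp only [hces] at h1
    exact tendsto_nhds_unique h1 h2
  obtain ⟨N, hN⟩ := hP (1 / 4) (by norm_num)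
  set n := N + 1 with hn
  have hnR : (0:ℝ) < n := by positivity
  have hnC : (n:ℂ) ≠ 0 := by exact_mod_cast hnR.ne'
  obtain ⟨j, hj, hjl⟩ := pow_near_one hl (show (0:ℝ) < 1 / (2 * n) by positivity)
  have h1 := hN n (by omega) (f j) (hfd j) (hfb j) z hzK
  rw [hP0 j hj, sub_zero, hces] at h1
  have hμ : ‖l ^ j‖ = 1 := by simp [hl]
  set μ := l ^ j
  have hpow : ∀ i : ℕ, ‖μ ^ i - 1‖ ≤ i * ‖μ - 1‖ := by
    intro i
    induction i with
    | zero => simp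
    | succ k ih =>
      have : μ ^ (k + 1) - 1 = μ ^ k * (μ - 1) + (μ ^ k - 1) := by ring
      rw [this]
      refine (norm_add_le _ _).trans ?_
      rw [norm_mul, norm_pow, hμ]
      push_cast
      simp only [one_pow, one_mul]
      linarith
  have h2 := avg_le (n := n) (ε := 1 / 2) (u := fun i => μ ^ (i + 1) - 1) (by norm_num) (by
    intro i hi
    refine (hpow (i + 1)).trans ?_
    have h3 : ((i + 1 : ℕ) : ℝ) ≤ n := by exact_mod_cast hi
    calc ((i + 1 : ℕ) : ℝ) * ‖μ - 1‖ ≤ n * (1 / (2 * n)) :=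
          mul_le_mul h3 hjl.le (norm_nonneg _) hnR.le
      _ = 1 / 2 := by field_simp)
  rw [Finset.sum_sub_distrib, mul_sub] at h2
  have h4 : (n:ℂ)⁻¹ * ∑ i ∈ Finset.range n, (1:ℂ) = 1 := by
    simp [hnC]
  rw [h4] at h2
  have h5 := norm_sub_norm_le (1:ℂ) ((n:ℂ)⁻¹ * ∑ i ∈ Finset.range n, μ ^ (i + 1))
  rw [norm_sub_rev, norm_one] at h5
  linarith

theorem not_unif_boundary {φ : ℂ → ℂ}
    (hφm : MapsTo φ (closedBall (0:ℂ) 1) (closedBall (0:ℂ) 1))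
    (hφb : MapsTo φ (ball (0:ℂ) 1) (ball (0:ℂ) 1)) {z₀ : ℂ} (h1 : ‖z₀‖ = 1)
    (hloc : ∀ z, ‖z‖ < 1 → Tendsto (fun n => φ^[n] z) atTop (𝓝 z₀))
    (h : UnifMeanErgodicDiscAlg φ) : False := by
  obtain ⟨P, hP⟩ := h
  set f : ℕ → ℂ → ℂ := fun j w => ((starRingEnd ℂ z₀ * w + 1) / 2) ^ j with hf
  have hfd : ∀ j, IsDiscAlg (f j) := fun j => ⟨by fun_prop, by fun_prop⟩
  have hfb : ∀ j, ∀ w ∈ closedBall (0:ℂ) 1, ‖f j w‖ ≤ 1 := by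
    intro j w hw
    simp only [hf, norm_pow]
    refine pow_le_one₀ (norm_nonneg _) ?_
    have hw1 := mem_closedBall_zero_iff.1 hw
    have := norm_add_le (starRingEnd ℂ z₀ * w) 1
    rw [norm_mul, RCLike.norm_conj, h1, norm_one] at this
    rw [norm_div]
    simp
    linarith
  have hfz : ∀ j, f j z₀ = 1 := by
    intro j
    have : (starRingEnd ℂ) z₀ * z₀ = 1 := by
      rw [mul_comm, Complex.mul_conj, Complex.normSq_eq_norm_sq, h1]; simp
    simp only [hf, this]
    norm_num
  have hP1 : ∀ j, P (f j) 0 = 1 := by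
    intro j
    have h2 : Tendsto (fun n => cesaro φ (f j) n 0) atTop (𝓝 (P (f j) 0)) := by
      rw [Metric.tendsto_atTop]
      intro ε hε
      obtain ⟨N, hN⟩ := hP (ε / 2) (by positivity)
      refine ⟨N, fun n hn => ?_⟩
      rw [dist_eq_norm]
      linarith [hN n hn (f j) (hfd j) (hfb j) 0 (by simp)]
    have h3 := cesaro_limit_interior (hfd j) hφm h1 hloc (z := 0) (by simp)
    rw [hfz] at h3
    exact tendsto_nhds_unique h2 h3
  obtain ⟨N, hN⟩ := hP (1 / 2) (by norm_num)
  have hlim : Tendsto (fun j => cesaro φ (f j) N 0) atTop (𝓝 0) := by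
    simp only [cesaro_eq]
    have : Tendsto (fun j => ∑ i ∈ Finset.range N, f j (φ^[i + 1] 0)) atTop
        (𝓝 (∑ i ∈ Finset.range N, (0:ℂ))) := by
      refine tendsto_finsetSum _ fun i _ => ?_
      refine tendsto_pow_atTop_nhds_zero_of_norm_lt_one ?_
      have hx : ‖φ^[i + 1] 0‖ < 1 := by simpa using hφb.iterate (i + 1) (x := 0) (by simp)
      have := norm_add_le (starRingEnd ℂ z₀ * φ^[i + 1] 0) 1
      rw [norm_mul, RCLike.norm_conj, h1, norm_one] at this
      rw [norm_div]
      simp only [RCLike.norm_ofNat]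
      linarith
    simpa using this.const_mul ((N:ℂ)⁻¹)
  have h2 : ∀ j, ‖cesaro φ (f j) N 0 - 1‖ ≤ 1 / 2 := by
    intro j
    rw [← hP1 j]
    exact hN N le_rfl (f j) (hfd j) (hfb j) 0 (by simp)
  have h3 := le_of_tendsto' ((hlim.sub_const 1).norm) h2
  norm_num at h3

theorem dichotomy {φ : ℂ → ℂ} (hφa : IsDiscAlg φ)
    (hφb : MapsTo φ (ball (0:ℂ) 1) (ball (0:ℂ) 1))
    (hnoint : ¬ ∃ z₀ ∈ ball (0:ℂ) 1,
      TendstoLocallyUniformlyOn (fun (n : ℕ) (z : ℂ) => φ^[n] z) (fun _ => z₀) atTop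
        (ball (0:ℂ) 1)) :
    (∃ a l : ℂ, ‖a‖ < 1 ∧ ‖l‖ = 1 ∧ φ a = a ∧
      ∀ w, ‖w‖ < 1 → mob a (φ w) = l * mob a w) ∨
    ((∀ a, ‖a‖ < 1 → φ a ≠ a) ∧ ∃ z₀ : ℂ, ‖z₀‖ = 1 ∧
      TendstoLocallyUniformlyOn (fun (n : ℕ) (z : ℂ) => φ^[n] z) (fun _ => z₀) atTop
        (ball (0:ℂ) 1)) := by
  by_cases H : ∃ a, ‖a‖ < 1 ∧ φ a = a
  · obtain ⟨a, ha, hfix⟩ := H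
    rcases fixed_case hφa.2 hφb ha hfix with ⟨l, hl, hrot⟩ | h
    · exact Or.inl ⟨a, l, ha, hl, hfix, hrot⟩
    · exact absurd ⟨a, by simpa using ha, h⟩ hnoint
  · right
    push Not at H
    exact ⟨H, dw_boundary hφa hφb H⟩


/-- **Theorem B1.** Let `φ ∈ A(𝔻)` map `𝔻̄` into `𝔻̄`, `φ` not the identity, and assume `φ`
has no interior Denjoy–Wolff point. Then: (1) `C_φ : A(𝔻) → A(𝔻)` is mean ergodic iff `φ`
is an elliptic automorphism or there is `z₀ ∈ ∂𝔻` with `φ^n → z₀` uniformly on compact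
subsets of `𝔻` such that for every `z ∈ ∂𝔻` and every neighborhood `U` of `z₀` the set
`{n : φ^n(z) ∈ U}` has density `1`; (2) `C_φ` is uniformly mean ergodic iff `φ` is a
periodic elliptic automorphism. -/
theorem stmt_16 (φ : ℂ → ℂ) (hφa : IsDiscAlg φ)
    (hφm : MapsTo φ (closedBall (0:ℂ) 1) (closedBall (0:ℂ) 1))
    (hφb : MapsTo φ (ball (0:ℂ) 1) (ball (0:ℂ) 1))
    (hφid : ¬ ∀ z ∈ closedBall (0:ℂ) 1, φ z = z)
    (hnoint : ¬ ∃ z₀ ∈ ball (0:ℂ) 1,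
      TendstoLocallyUniformlyOn (fun (n : ℕ) (z : ℂ) => φ^[n] z) (fun _ => z₀) atTop
        (ball (0:ℂ) 1)) :
    (MeanErgodicDiscAlg φ ↔
      (IsEllipticAutomorphism φ ∨
        ∃ z₀ : ℂ, ‖z₀‖ = 1 ∧
          TendstoLocallyUniformlyOn (fun (n : ℕ) (z : ℂ) => φ^[n] z) (fun _ => z₀) atTop
            (ball (0:ℂ) 1) ∧
          ∀ z : ℂ, ‖z‖ = 1 → ∀ U ∈ 𝓝 z₀, HasDensityOne {n : ℕ | φ^[n] z ∈ U})) ∧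
    (UnifMeanErgodicDiscAlg φ ↔
      (IsEllipticAutomorphism φ ∧ ∃ k : ℕ, 0 < k ∧ ∀ z ∈ closedBall (0:ℂ) 1, φ^[k] z = z)) := by
  have hpt : ∀ z₀ : ℂ, TendstoLocallyUniformlyOn (fun (n : ℕ) (z : ℂ) => φ^[n] z) (fun _ => z₀)
      atTop (ball (0:ℂ) 1) → ∀ z, ‖z‖ < 1 → Tendsto (fun n => φ^[n] z) atTop (𝓝 z₀) :=
    fun z₀ h z hz => h.tendsto_at (mem_ball_zero_iff.2 hz)
  rcases dichotomy hφa hφb hnoint with ⟨a, l, ha, hl, hfix, hrot⟩ | ⟨hno, z₀, h1, hloc⟩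
  · have hell := elliptic_of_rot hφa hφb ha hl hfix hrot
    have hrc := rot_closed hφa hφm ha hrot
    refine ⟨⟨fun _ => Or.inl hell, fun _ => elliptic_ergodic ha hl hφm hrc⟩, ?_, ?_⟩
    · intro h
      refine ⟨hell, ?_⟩
      obtain ⟨k, hk, hlk⟩ := root_of_unif ha hl hrc h
      refine ⟨k, hk, fun z hz => ?_⟩
      have h2 := hrc k z hz
      rw [hlk, one_mul] at h2
      rw [← mob_mob ha (mem_closedBall_zero_iff.1 (hφm.iterate k hz)), h2,
        mob_mob ha (mem_closedBall_zero_iff.1 hz)]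
    · rintro ⟨-, k, hk, hper⟩
      exact unif_of_periodic hφm hk hper
  · have hnell : ¬ IsEllipticAutomorphism φ := by
      rintro ⟨-, z, hz, hfix⟩
      exact hno z (mem_ball_zero_iff.1 hz) hfix
    refine ⟨⟨fun h => Or.inr ⟨z₀, h1, hloc,
      density_of_ergodic hφa hφm h1 (hpt z₀ hloc) h⟩, ?_⟩, ?_, ?_⟩
    · rintro (h | ⟨w, hw1, hwloc, hden⟩)
      · exact absurd h hnell
      · exact ergodic_of_density hφa hφm hw1 (hpt w hwloc) hden
    · intro h
      exact (not_unif_boundary hφm hφb h1 (hpt z₀ hloc) h).elim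
    · rintro ⟨h, -⟩
      exact absurd h hnell
end
end

section
/- Let λ ∈ ℂ with |λ| = 1 not be a root of unity and consider the symbol φ(z) = λz. Fix 0 < α < 1, R > 1, r₀ ∈ (0,1), and a strictly increasing sequence (n_k)_k of positive integers with n_k ≥ k and |1 − λ^{n_k}| ≤ 1/R^k for every k. Define the typical weight v_α on 𝔻 by v_α(r) = C·(Σ_{k=1}^∞ r^{n_k})^{−α} for r₀ ≤ r < 1 and v_α(r) = 1 for r ≤ r₀, where C = (Σ_{k=1}^∞ r₀^{n_k})^α. Then the composition operator C_φ is not uniformly mean ergodic on H_{v_α}^0, and it is not mean ergodic on H_{v_α}^∞. -/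
open Metric Set Filter Complex
open scoped Topology Classical

noncomputable section

lemma aux_geom (μ : ℂ) (n : ℕ) :
    (∑ j ∈ Finset.Icc 1 n, μ ^ j) * (1 - μ) = μ - μ ^ (n + 1) := by
  induction n with
  | zero => simp
  | succ k ih =>
    rw [Finset.sum_Icc_succ_top (by omega), add_mul, ih]; ring

/-- The averages of the powers of `μ`. -/
def avgPow (μ : ℂ) (n : ℕ) : ℂ := (n : ℂ)⁻¹ * ∑ j ∈ Finset.Icc 1 n, μ ^ j

lemma avgPow_norm_le (μ : ℂ) (hμ : ‖μ‖ = 1) (n : ℕ) : ‖avgPow μ n‖ ≤ 1 := by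
  unfold avgPow
  rw [norm_mul, norm_inv, Complex.norm_natCast]
  have h : ‖∑ j ∈ Finset.Icc 1 n, μ ^ j‖ ≤ n := by
    refine (norm_sum_le _ _).trans ?_
    simp [hμ]
  rcases Nat.eq_zero_or_pos n with h0 | h0
  · simp [h0]
  · have : (0:ℝ) < n := by exact_mod_cast h0
    rw [inv_mul_le_iff₀ this]; simpa using h

lemma avgPow_tendsto (μ : ℂ) (hμ : ‖μ‖ = 1) (h1 : μ ≠ 1) :
    Tendsto (avgPow μ) atTop (𝓝 0) := by
  have hpos : 0 < ‖1 - μ‖ := norm_pos_iff.2 (sub_ne_zero.2 h1.symm)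
  apply squeeze_zero_norm (a := fun n : ℕ => (2 / ‖1 - μ‖) / (n : ℝ))
  · intro n
    unfold avgPow
    rw [norm_mul, norm_inv, Complex.norm_natCast, div_eq_inv_mul _ (n:ℝ)]
    refine mul_le_mul_of_nonneg_left ?_ (by positivity)
    rw [le_div_iff₀ hpos, ← norm_mul, aux_geom]
    refine (norm_sub_le _ _).trans ?_
    rw [norm_pow, hμ]; norm_num
  · exact tendsto_const_div_atTop_nhds_zero_nat _

lemma pow_sub_one_le (μ : ℂ) (hμ : ‖μ‖ = 1) (j : ℕ) : ‖1 - μ ^ j‖ ≤ j * ‖1 - μ‖ := by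
  induction j with
  | zero => simp
  | succ k ih =>
    have : 1 - μ ^ (k + 1) = (1 - μ ^ k) + μ ^ k * (1 - μ) := by ring
    rw [this]
    refine (norm_add_le _ _).trans ?_
    rw [norm_mul, norm_pow, hμ, one_pow]
    push_cast
    linarith

lemma avgPow_near (μ : ℂ) (hμ : ‖μ‖ = 1) (n : ℕ) (hn : 0 < n) :
    ‖1 - avgPow μ n‖ ≤ n * ‖1 - μ‖ := by
  have hn' : (0:ℝ) < n := by exact_mod_cast hn
  have hnC : (n:ℂ) ≠ 0 := by exact_mod_cast hn.ne'
  have : 1 - avgPow μ n = (n : ℂ)⁻¹ * ∑ j ∈ Finset.Icc 1 n, (1 - μ ^ j) := by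
    unfold avgPow
    rw [Finset.sum_sub_distrib, mul_sub]
    simp [hnC]
  rw [this, norm_mul, norm_inv, Complex.norm_natCast, inv_mul_le_iff₀ hn']
  refine (norm_sum_le _ _).trans ?_
  calc ∑ j ∈ Finset.Icc 1 n, ‖1 - μ ^ j‖ ≤ ∑ j ∈ Finset.Icc 1 n, (n * ‖1 - μ‖) := by
        refine Finset.sum_le_sum fun j hj => (pow_sub_one_le μ hμ j).trans ?_
        have : (j:ℝ) ≤ n := by exact_mod_cast (Finset.mem_Icc.1 hj).2
        gcongr
    _ = _ := by simp

lemma iter_rot (lam z : ℂ) (m : ℕ) : (fun w => lam * w)^[m] z = lam ^ m * z := by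
  rw [mul_left_iterate]

/-- Coefficients `(k+1)^α - k^α`. -/
def coefA (α : ℝ) (k : ℕ) : ℝ := ((k:ℝ) + 1) ^ α - (k:ℝ) ^ α

lemma coefA_nonneg {α : ℝ} (h0 : 0 < α) (k : ℕ) : 0 ≤ coefA α k := by
  unfold coefA
  have := Real.rpow_le_rpow (z := α) (Nat.cast_nonneg k) (by linarith : (k:ℝ) ≤ k + 1) h0.le
  linarith

lemma coefA_anti {α : ℝ} (h0 : 0 < α) (h1 : α < 1) : Antitone (coefA α) := by
  apply antitone_nat_of_succ_le
  intro k
  have hk0 : (0:ℝ) ≤ k := Nat.cast_nonneg k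
  have hk2 : (0:ℝ) ≤ (k:ℝ) + 2 := by linarith
  have hc := (Real.concaveOn_rpow h0.le h1.le).2 (Set.mem_Ici.2 hk0) (Set.mem_Ici.2 hk2)
    (by norm_num : (0:ℝ) ≤ 1/2) (by norm_num : (0:ℝ) ≤ 1/2) (by norm_num)
  simp only [smul_eq_mul] at hc
  have e : (1/2 * (k:ℝ) + 1/2 * ((k:ℝ) + 2)) = k + 1 := by ring
  rw [e] at hc
  unfold coefA
  push_cast
  have e2 : (k:ℝ) + 1 + 1 = k + 2 := by ring
  rw [e2]; linarith

lemma coefA_sum {α : ℝ} (h0 : 0 < α) (K : ℕ) :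
    ∑ k ∈ Finset.range K, coefA α k = (K:ℝ) ^ α := by
  induction K with
  | zero => simp [Real.zero_rpow h0.ne']
  | succ k ih => rw [Finset.sum_range_succ, ih, coefA]; push_cast; ring

lemma coefA_le_one {α : ℝ} (h0 : 0 < α) (h1 : α < 1) (k : ℕ) : coefA α k ≤ 1 := by
  have := coefA_anti h0 h1 (Nat.zero_le k)
  simpa [coefA, Real.zero_rpow h0.ne'] using this

lemma coefA_mul_le {α : ℝ} (h0 : 0 < α) (h1 : α < 1) (K : ℕ) :
    (K:ℝ) * coefA α K ≤ (K:ℝ) ^ α := by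
  rw [← coefA_sum h0]
  have := Finset.card_nsmul_le_sum (Finset.range K) (coefA α) (coefA α K)
    (fun k hk => coefA_anti h0 h1 (Finset.mem_range.1 hk).le)
  simpa using this

/-- Upper bound. -/
lemma upper_bound {α : ℝ} (h0 : 0 < α) (h1 : α < 1) (x : ℕ → ℝ) (hx0 : ∀ k, 0 ≤ x k)
    (hx1 : ∀ k, x k ≤ 1) (hs : Summable x) :
    ∑' k, coefA α k * x k ≤ 2 * (∑' k, x k + 1) ^ α := by
  set S := ∑' k, x k with hS
  have hS0 : 0 ≤ S := tsum_nonneg hx0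
  set K := ⌈S⌉₊ with hK
  have hSK : S ≤ K := Nat.le_ceil S
  have hKS : (K:ℝ) ≤ S + 1 := (Nat.ceil_lt_add_one hS0).le
  have hsum : Summable fun k => coefA α k * x k :=
    Summable.of_nonneg_of_le (fun k => mul_nonneg (coefA_nonneg h0 k) (hx0 k))
      (fun k => by
        have := mul_le_mul_of_nonneg_right (coefA_le_one h0 h1 k) (hx0 k); simpa using this) hs
  have hle : ∀ k, coefA α k * x k ≤
      (if k ∈ Finset.range K then coefA α k else 0) + coefA α K * x k := by
    intro k
    have hp := mul_nonneg (coefA_nonneg h0 K) (hx0 k)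
    split_ifs with hk
    · have := mul_le_mul_of_nonneg_left (hx1 k) (coefA_nonneg h0 k)
      linarith
    · have hk' : K ≤ k := by simpa using hk
      have := mul_le_mul_of_nonneg_right (coefA_anti h0 h1 hk') (hx0 k)
      linarith
  have hsf : HasSum (fun k => if k ∈ Finset.range K then coefA α k else 0)
      (∑ k ∈ Finset.range K, coefA α k) := by
    have := hasSum_sum_of_ne_finset_zero (L := SummationFilter.unconditional ℕ) (s := Finset.range K)
      (f := fun k => if k ∈ Finset.range K then coefA α k else 0)
      (fun b hb => by simp only [if_neg hb])
    convert this using 1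
    exact Finset.sum_congr rfl (fun k hk => by simp only [if_pos hk])
  have hR := hsf.add (hs.hasSum.mul_left (coefA α K))
  have h2 := hasSum_le hle hsum.hasSum hR
  rw [coefA_sum h0] at h2
  have h3 : coefA α K * S ≤ (K:ℝ) ^ α := by
    refine le_trans ?_ (coefA_mul_le h0 h1 K)
    rw [mul_comm]
    exact mul_le_mul_of_nonneg_right hSK (coefA_nonneg h0 K)
  have h4 : (K:ℝ) ^ α ≤ (S + 1) ^ α := Real.rpow_le_rpow (Nat.cast_nonneg K) hKS h0.le
  linarith

lemma pow_summable (n : ℕ → ℕ) (hn : ∀ k, k + 1 ≤ n k) (r : ℝ) (h0 : 0 ≤ r) (h1 : r < 1) :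
    Summable fun k => r ^ n k :=
  Summable.of_nonneg_of_le (fun k => by positivity)
    (fun k => pow_le_pow_of_le_one h0 h1.le ((Nat.le_succ k).trans (hn k)))
    (summable_geometric_of_lt_one h0 h1)

lemma exists_min (n : ℕ → ℕ) (hn : ∀ k, k + 1 ≤ n k) (m : ℕ) :
    ∃ K, m ≤ K ∧ ∀ k, m ≤ k → (n K : ℝ) / (K + 1) ≤ 2 * ((n k : ℝ) / (k + 1)) := by
  set q : ℕ → ℝ := fun k => (n k : ℝ) / (k + 1) with hq
  have hq1 : ∀ k, 1 ≤ q k := fun k => by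
    have : ((k + 1 : ℕ) : ℝ) ≤ n k := by exact_mod_cast hn k
    push_cast at this
    rw [hq]; simp only
    rw [le_div_iff₀ (by positivity)]; linarith
  have hne : (q '' Set.Ici m).Nonempty := ⟨q m, m, by simp, rfl⟩
  have hbd : BddBelow (q '' Set.Ici m) := ⟨1, by rintro _ ⟨k, _, rfl⟩; exact hq1 k⟩
  have hI : 1 ≤ sInf (q '' Set.Ici m) := le_csInf hne (by rintro _ ⟨k, _, rfl⟩; exact hq1 k)
  obtain ⟨_, ⟨K, hK, rfl⟩, hlt⟩ := exists_lt_of_csInf_lt hne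
    (by linarith : sInf (q '' Set.Ici m) < 2 * sInf (q '' Set.Ici m))
  refine ⟨K, hK, fun k hk => ?_⟩
  have := csInf_le hbd ⟨k, hk, rfl⟩
  change q K ≤ 2 * q k
  linarith

/-- Lower bound at suitable radii. -/
lemma lower_bound {α : ℝ} (h0 : 0 < α) (h1 : α < 1) (n : ℕ → ℕ) (hn : ∀ k, k + 1 ≤ n k)
    (hm : StrictMono n) (m : ℕ) :
    ∃ r : ℝ, 1 - 1 / ((m:ℝ) + 1) ≤ r ∧ 0 ≤ r ∧ r < 1 ∧
      ((m:ℝ) + 1) ^ α / 2 ≤ ∑' k, coefA α k * r ^ n k ∧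
      (∑' k, r ^ n k) ^ α ≤ 12 * ∑' k, coefA α k * r ^ n k := by
  obtain ⟨K, hmK, hK⟩ := exists_min n hn m
  have hnK : (K:ℝ) + 1 ≤ n K := by exact_mod_cast hn K
  have hmK' : (m:ℝ) ≤ K := by exact_mod_cast hmK
  have hm0 : (0:ℝ) ≤ m := Nat.cast_nonneg m
  have hnpos : (0:ℝ) < n K := by linarith
  set t : ℝ := 1 / (2 * n K) with ht
  have ht0 : 0 < t := by positivity
  have htn : t * n K = 1 / 2 := by rw [ht]; field_simp
  have ht1 : t ≤ 1 / 2 := by nlinarith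
  have htm : t ≤ 1 / ((m:ℝ) + 1) := by
    rw [ht]; apply one_div_le_one_div_of_le <;> linarith
  set r := 1 - t with hr
  have hr0 : 0 ≤ r := by linarith
  have hr1 : r < 1 := by linarith
  have hs := pow_summable n hn r hr0 hr1
  have hsum : Summable fun k => coefA α k * r ^ n k :=
    Summable.of_nonneg_of_le (fun k => mul_nonneg (coefA_nonneg h0 k) (by positivity))
      (fun k => by
        have := mul_le_mul_of_nonneg_right (coefA_le_one h0 h1 k) (pow_nonneg hr0 (n k))
        simpa using this) hs
  have hB : 1 / 2 ≤ r ^ n K := by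
    have := one_add_mul_le_pow (a := -t) (by linarith) (n K)
    have e : 1 + -t = r := by rw [hr]; ring
    rw [e] at this
    linarith
  have hlow : ((K:ℝ) + 1) ^ α / 2 ≤ ∑' k, coefA α k * r ^ n k := by
    have h2 := hsum.sum_le_tsum (Finset.range (K + 1))
      (fun k _ => mul_nonneg (coefA_nonneg h0 k) (by positivity))
    refine le_trans ?_ h2
    have h3 := coefA_sum h0 (K + 1)
    push_cast at h3
    rw [← h3, Finset.sum_div]
    refine Finset.sum_le_sum fun k hk => ?_
    have hkK : k ≤ K := by simpa [Nat.lt_succ_iff] using hk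
    have : r ^ n K ≤ r ^ n k := pow_le_pow_of_le_one hr0 hr1.le (hm.monotone hkK)
    have := mul_le_mul_of_nonneg_left (hB.trans this) (coefA_nonneg h0 k)
    linarith
  have hup : ∑' k, r ^ n k ≤ 6 * ((K:ℝ) + 1) := by
    set s : ℝ := 1 / (4 * ((K:ℝ) + 1)) with hsdef
    have hs0 : 0 < s := by positivity
    set ρ := Real.exp (-s) with hρ
    have hρ0 : 0 ≤ ρ := (Real.exp_pos _).le
    have hρ1 : ρ < 1 := by rw [hρ, Real.exp_lt_one_iff]; linarith
    have hρs : ρ ≤ 1 / (1 + s) := by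
      rw [hρ, Real.exp_neg, ← one_div]
      apply one_div_le_one_div_of_le (by linarith)
      linarith [Real.add_one_le_exp s]
    have hterm : ∀ k, r ^ n k ≤ (if k ∈ Finset.range (K + 1) then 1 else 0) + ρ ^ k := by
      intro k
      split_ifs with hk
      · have : r ^ n k ≤ 1 := pow_le_one₀ hr0 hr1.le
        have : 0 ≤ ρ ^ k := by positivity
        linarith
      · have hkK : K + 1 ≤ k := by simpa using hk
        have h2 := hK k (by omega)
        have hkp : (0:ℝ) < k + 1 := by positivity
        have hKp : (0:ℝ) < K + 1 := by positivity
        have hr' : r ≤ Real.exp (-t) := by linarith [Real.add_one_le_exp (-t)]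
        have h3 : r ^ n k ≤ Real.exp (-t) ^ n k := pow_le_pow_left₀ hr0 hr' _
        rw [zero_add]
        refine h3.trans ?_
        rw [hρ, ← Real.exp_nat_mul, ← Real.exp_nat_mul, Real.exp_le_exp]
        have h4 : (n K : ℝ) * (k + 1) ≤ 2 * n k * (K + 1) := by
          rw [← mul_div_assoc, div_le_div_iff₀ hKp hkp] at h2
          exact h2
        have h5 : (k:ℝ) * s ≤ n k * t := by
          rw [hsdef, ht, mul_one_div, mul_one_div, div_le_div_iff₀ (by positivity) (by positivity)]
          nlinarith
        linarith
    have hsf : HasSum (fun k => if k ∈ Finset.range (K+1) then (1:ℝ) else 0) ((K:ℝ) + 1) := by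
      have := hasSum_sum_of_ne_finset_zero (L := SummationFilter.unconditional ℕ) (s := Finset.range (K+1))
        (f := fun k => if k ∈ Finset.range (K+1) then (1:ℝ) else 0)
        (fun b hb => by simp only [if_neg hb])
      convert this using 1
      rw [Finset.sum_congr rfl (fun k hk => if_pos hk)]
      simp
    have h2 := hasSum_le hterm hs.hasSum (hsf.add (hasSum_geometric_of_lt_one hρ0 hρ1))
    have h3 : (1 - ρ)⁻¹ ≤ 1 + 4 * ((K:ℝ) + 1) := by
      have e : 1 + 4 * ((K:ℝ) + 1) = (s / (1 + s))⁻¹ := by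
        rw [hsdef]; field_simp; ring
      rw [e]
      apply inv_anti₀ (by positivity)
      have : s / (1 + s) = 1 - 1 / (1 + s) := by field_simp; ring
      linarith
    linarith [Nat.cast_nonneg (α := ℝ) K]
  refine ⟨r, by linarith, hr0, hr1, ?_, ?_⟩
  · refine le_trans ?_ hlow
    have : ((m:ℝ) + 1) ^ α ≤ ((K:ℝ) + 1) ^ α :=
      Real.rpow_le_rpow (by linarith) (by linarith) h0.le
    linarith
  · have h2 : (∑' k, r ^ n k) ^ α ≤ (6 * ((K:ℝ) + 1)) ^ α :=
      Real.rpow_le_rpow (tsum_nonneg fun k => by positivity) hup h0.le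
    rw [Real.mul_rpow (by norm_num) (by positivity)] at h2
    have h6 : (6:ℝ) ^ α ≤ 6 := by
      have := Real.rpow_le_rpow_of_exponent_le (x := 6) (by norm_num) h1.le
      simpa using this
    have hp : 0 ≤ ((K:ℝ) + 1) ^ α := by positivity
    have := mul_le_mul_of_nonneg_right h6 hp
    linarith

/-- The lacunary-type test function. -/
def testF (α : ℝ) (n : ℕ → ℕ) (z : ℂ) : ℂ := ∑' k, (coefA α k : ℂ) * z ^ n k

lemma testF_term_le {α : ℝ} (h0 : 0 < α) (h1 : α < 1) (n : ℕ → ℕ) (z : ℂ) (k : ℕ) :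
    ‖(coefA α k : ℂ) * z ^ n k‖ ≤ ‖z‖ ^ n k := by
  rw [norm_mul, norm_pow, Complex.norm_real, Real.norm_of_nonneg (coefA_nonneg h0 k)]
  have := mul_le_mul_of_nonneg_right (coefA_le_one h0 h1 k) (pow_nonneg (norm_nonneg z) (n k))
  simpa using this

lemma testF_summable {α : ℝ} (h0 : 0 < α) (h1 : α < 1) (n : ℕ → ℕ) (hn : ∀ k, k + 1 ≤ n k)
    (z : ℂ) (hz : ‖z‖ < 1) : Summable fun k => (coefA α k : ℂ) * z ^ n k :=
  Summable.of_norm_bounded (pow_summable n hn ‖z‖ (norm_nonneg z) hz)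
    (fun k => testF_term_le h0 h1 n z k)

lemma testF_diff {α : ℝ} (h0 : 0 < α) (h1 : α < 1) (n : ℕ → ℕ) (hn : ∀ k, k + 1 ≤ n k) :
    DifferentiableOn ℂ (testF α n) (ball (0:ℂ) 1) := by
  intro z hz
  have hz' : ‖z‖ < 1 := by simpa using hz
  obtain ⟨ρ, hρ, hρ1⟩ := exists_between hz'
  have hρ0 : 0 ≤ ρ := (norm_nonneg z).trans hρ.le
  have hd : DifferentiableOn ℂ (testF α n) (ball (0:ℂ) ρ) := by
    refine differentiableOn_tsum_of_summable_norm (u := fun k => ρ ^ n k)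
      (pow_summable n hn ρ hρ0 hρ1) (fun k => by fun_prop) isOpen_ball ?_
    intro k w hw
    have hw' : ‖w‖ < ρ := by simpa using hw
    exact (testF_term_le h0 h1 n w k).trans (pow_le_pow_left₀ (norm_nonneg w) hw'.le _)
  exact (hd.differentiableAt (isOpen_ball.mem_nhds (by simpa using hρ))).differentiableWithinAt

lemma testF_norm_le {α : ℝ} (h0 : 0 < α) (h1 : α < 1) (n : ℕ → ℕ) (hn : ∀ k, k + 1 ≤ n k)
    (z : ℂ) (hz : ‖z‖ < 1) : ‖testF α n z‖ ≤ 2 * (∑' k, ‖z‖ ^ n k + 1) ^ α := by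
  have hs := testF_summable h0 h1 n hn z hz
  refine (norm_tsum_le_tsum_norm hs.norm).trans ?_
  have e : ∀ k, ‖(coefA α k : ℂ) * z ^ n k‖ = coefA α k * ‖z‖ ^ n k := fun k => by
    rw [norm_mul, norm_pow, Complex.norm_real, Real.norm_of_nonneg (coefA_nonneg h0 k)]
  simp_rw [e]
  exact upper_bound h0 h1 _ (fun k => by positivity)
    (fun k => pow_le_one₀ (norm_nonneg z) hz.le) (pow_summable n hn ‖z‖ (norm_nonneg z) hz)

lemma cesaro_testF {α : ℝ} (h0 : 0 < α) (h1 : α < 1) (n : ℕ → ℕ) (hn : ∀ k, k + 1 ≤ n k)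
    (lam : ℂ) (hlam : ‖lam‖ = 1) (N : ℕ) (z : ℂ) (hz : ‖z‖ < 1) :
    cesaro (fun w => lam * w) (testF α n) N z =
      ∑' k, avgPow (lam ^ n k) N * ((coefA α k : ℂ) * z ^ n k) := by
  unfold cesaro
  simp_rw [iter_rot]
  unfold testF
  rw [← Summable.tsum_finsetSum, ← tsum_mul_left]
  · congr 1; ext k
    unfold avgPow
    rw [mul_assoc, Finset.sum_mul]
    congr 1
    refine Finset.sum_congr rfl fun j _ => ?_
    rw [mul_pow, ← pow_mul, ← pow_mul, mul_comm j]; ring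
  · intro j _
    exact testF_summable h0 h1 n hn _ (by rw [norm_mul, norm_pow, hlam]; simpa using hz)

lemma cesaro_testF_tendsto {α : ℝ} (h0 : 0 < α) (h1 : α < 1) (n : ℕ → ℕ)
    (hn : ∀ k, k + 1 ≤ n k) (lam : ℂ) (hlam : ‖lam‖ = 1)
    (hnot : ∀ j : ℕ, 0 < j → lam ^ j ≠ 1) (z : ℂ) (hz : ‖z‖ < 1) :
    Tendsto (fun N => cesaro (fun w => lam * w) (testF α n) N z) atTop (𝓝 0) := by
  simp_rw [cesaro_testF h0 h1 n hn lam hlam _ z hz]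
  have hl : ∀ k, ‖lam ^ n k‖ = 1 := fun k => by rw [norm_pow, hlam, one_pow]
  have := tendsto_tsum_of_dominated_convergence (𝓕 := atTop)
    (f := fun (N : ℕ) (k : ℕ) => avgPow (lam ^ n k) N * ((coefA α k : ℂ) * z ^ n k))
    (g := fun _ => (0:ℂ)) (pow_summable n hn ‖z‖ (norm_nonneg z) hz)
    (fun k => by
      have := (avgPow_tendsto (lam ^ n k) (hl k) (hnot _ (by have := hn k; omega))).mul_const
        ((coefA α k : ℂ) * z ^ n k)
      simpa using this)
    (Eventually.of_forall fun N k => by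
      rw [norm_mul]
      have h2 := testF_term_le h0 h1 n z k
      have h3 := mul_le_mul_of_nonneg_right (avgPow_norm_le _ (hl k) N)
        (norm_nonneg ((coefA α k : ℂ) * z ^ n k))
      linarith)
  simpa using this

lemma cesaro_testF_near {α : ℝ} (h0 : 0 < α) (h1 : α < 1) (n : ℕ → ℕ)
    (hn : ∀ k, k + 1 ≤ n k) (lam : ℂ) (hlam : ‖lam‖ = 1) (R : ℝ) (hR : 1 < R)
    (hsmall : ∀ k, ‖1 - lam ^ n k‖ ≤ 1 / R ^ (k + 1)) (N : ℕ) (hN : 0 < N) :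
    ∃ E : ℝ, ∀ z : ℂ, ‖z‖ < 1 →
      ‖testF α n z - cesaro (fun w => lam * w) (testF α n) N z‖ ≤ E := by
  have hl : ∀ k, ‖lam ^ n k‖ = 1 := fun k => by rw [norm_pow, hlam, one_pow]
  have hRi : Summable fun k : ℕ => (N:ℝ) * (1 / R ^ (k + 1)) := by
    apply Summable.mul_left
    have := (summable_geometric_of_lt_one (r := R⁻¹) (by positivity)
      (inv_lt_one_of_one_lt₀ hR)).mul_left R⁻¹
    refine this.congr fun k => ?_
    rw [one_div, ← inv_pow, pow_succ]; ring
  refine ⟨∑' k : ℕ, (N:ℝ) * (1 / R ^ (k + 1)), fun z hz => ?_⟩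
  have hs := testF_summable h0 h1 n hn z hz
  have hs2 : Summable fun k => avgPow (lam ^ n k) N * ((coefA α k : ℂ) * z ^ n k) := by
    refine Summable.of_norm_bounded hs.norm fun k => ?_
    rw [norm_mul]
    have h3 := mul_le_mul_of_nonneg_right (avgPow_norm_le _ (hl k) N)
        (norm_nonneg ((coefA α k : ℂ) * z ^ n k))
    linarith
  rw [cesaro_testF h0 h1 n hn lam hlam N z hz, testF, ← hs.tsum_sub hs2]
  refine tsum_of_norm_bounded hRi.hasSum fun k => ?_
  have e : (coefA α k : ℂ) * z ^ n k - avgPow (lam ^ n k) N * ((coefA α k : ℂ) * z ^ n k)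
    = (1 - avgPow (lam ^ n k) N) * ((coefA α k : ℂ) * z ^ n k) := by ring
  rw [e, norm_mul]
  have h2 : ‖(coefA α k : ℂ) * z ^ n k‖ ≤ 1 :=
    (testF_term_le h0 h1 n z k).trans (pow_le_one₀ (norm_nonneg z) hz.le)
  have h3 := (avgPow_near (lam ^ n k) (hl k) N hN).trans
    (mul_le_mul_of_nonneg_left (hsmall k) (Nat.cast_nonneg N))
  calc _ ≤ ‖1 - avgPow (lam ^ n k) N‖ * 1 := by gcongr
    _ ≤ _ := by simpa using h3

lemma cesaro_monomial (lam c : ℂ) (m N : ℕ) (z : ℂ) :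
    cesaro (fun w => lam * w) (fun w => c * w ^ m) N z = avgPow (lam ^ m) N * (c * z ^ m) := by
  unfold cesaro avgPow
  simp_rw [iter_rot]
  rw [mul_assoc, Finset.sum_mul]
  congr 1
  refine Finset.sum_congr rfl fun j _ => ?_
  rw [mul_pow, ← pow_mul, ← pow_mul, mul_comm j]; ring

/-- If the Cesàro means are uniformly close to something and tend to zero pointwise,
they are uniformly small. -/
lemma small_of_limit (A : ℕ → ℂ) (g : ℂ) (w ε : ℝ) (N : ℕ)
    (h : ∀ n ≥ N, w * ‖A n - g‖ ≤ ε) (hw : 0 ≤ w) (hA : Tendsto A atTop (𝓝 0)) :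
    w * ‖A N‖ ≤ 2 * ε := by
  have h1 : Tendsto (fun n => w * ‖A n - A N‖) atTop (𝓝 (w * ‖0 - A N‖)) :=
    ((hA.sub_const _).norm).const_mul w
  have h2 : w * ‖0 - A N‖ ≤ 2 * ε := by
    refine le_of_tendsto h1 (eventually_atTop.2 ⟨N, fun n hn => ?_⟩)
    have h3 := h n hn
    have h4 := h N le_rfl
    have h5 : ‖A n - A N‖ ≤ ‖A n - g‖ + ‖A N - g‖ := by
      have : A n - A N = (A n - g) - (A N - g) := by ring
      rw [this]; exact norm_sub_le _ _
    have := mul_le_mul_of_nonneg_left h5 hw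
    linarith
  simpa using h2

/-- Divergence of the sum of powers at the boundary. -/
lemma sum_large (n : ℕ → ℕ) (hn : ∀ k, k + 1 ≤ n k) (M : ℝ) :
    ∃ r : ℝ, r < 1 ∧ ∀ x : ℝ, r ≤ x → 0 ≤ x → x < 1 → M ≤ ∑' k, x ^ n k := by
  obtain ⟨L, hL⟩ := exists_nat_gt M
  have hc : Tendsto (fun x : ℝ => ∑ k ∈ Finset.range L, x ^ n k) (𝓝[<] 1) (𝓝 L) := by
    have : Continuous (fun x : ℝ => ∑ k ∈ Finset.range L, x ^ n k) := by fun_prop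
    have := (this.tendsto 1).mono_left (nhdsWithin_le_nhds (s := Set.Iio 1))
    simpa using this
  have he := hc.eventually_const_lt hL
  obtain ⟨r, hr, hr2⟩ := (mem_nhdsLT_iff_exists_Ioo_subset (a := (1:ℝ))).1 he
  have hr' : r < 1 := hr
  refine ⟨(r + 1) / 2, by linarith, fun x hx hx0 hx1 => ?_⟩
  have hx2 : M < ∑ k ∈ Finset.range L, x ^ n k := hr2 ⟨by linarith, hx1⟩
  exact hx2.le.trans ((pow_summable n hn x hx0 hx1).sum_le_tsum _ (fun k _ => by positivity))

/-- **A weight for which the irrational rotation is not (uniformly) mean ergodic.** Let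
`λ` with `|λ| = 1` not be a root of unity, `0 < α < 1`, `R > 1`, `r₀ ∈ (0,1)`, and let
`(n_k)_{k ≥ 1}` be a strictly increasing sequence of positive integers with `n_k ≥ k` and
`|1 - λ^{n_k}| ≤ 1/R^k`. Define the typical weight `v_α` by `v_α(r) = 1` for `r ≤ r₀` and
`v_α(r) = C (∑_{k=1}^∞ r^{n_k})^{-α}` for `r₀ ≤ r < 1`, where `C = (∑_{k=1}^∞ r₀^{n_k})^α`.
Then for `φ(z) = λz` the operator `C_φ` is not uniformly mean ergodic on `H_{v_α}^0` and not
mean ergodic on `H_{v_α}^∞`. -/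
theorem stmt_19 (lam : ℂ) (hlam : ‖lam‖ = 1) (hnotroot : ∀ j : ℕ, 0 < j → lam ^ j ≠ 1)
    (α : ℝ) (hα0 : 0 < α) (hα1 : α < 1) (R : ℝ) (hR : 1 < R)
    (r₀ : ℝ) (hr₀0 : 0 < r₀) (hr₀1 : r₀ < 1)
    (ns : ℕ → ℕ) (hmono : StrictMono ns)
    (hns : ∀ k : ℕ, 1 ≤ k → k ≤ ns k)
    (hsmall : ∀ k : ℕ, 1 ≤ k → ‖1 - lam ^ ns k‖ ≤ 1 / R ^ k)
    (vα : ℂ → ℝ)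
    (hvα : ∀ z : ℂ, vα z =
      if ‖z‖ ≤ r₀ then 1
      else (∑' k : ℕ, r₀ ^ ns (k + 1)) ^ α * (∑' k : ℕ, ‖z‖ ^ ns (k + 1)) ^ (-α)) :
    -- not uniformly mean ergodic on `H_{v_α}^0`
    (¬ ∃ P : (ℂ → ℂ) → ℂ → ℂ, ∀ ε > (0:ℝ), ∃ N : ℕ, ∀ n ≥ N,
      ∀ f : ℂ → ℂ, IsHv0 vα f → (∀ z ∈ ball (0:ℂ) 1, vα z * ‖f z‖ ≤ 1) →
        ∀ z ∈ ball (0:ℂ) 1,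
          vα z * ‖cesaro (fun w => lam * w) f n z - P f z‖ ≤ ε) ∧
    -- not mean ergodic on `H_{v_α}^∞`
    (¬ ∀ f : ℂ → ℂ, IsHvInf vα f → ∃ g : ℂ → ℂ, ∀ ε > (0:ℝ), ∃ N : ℕ, ∀ n ≥ N,
      ∀ z ∈ ball (0:ℂ) 1,
        vα z * ‖cesaro (fun w => lam * w) f n z - g z‖ ≤ ε) := by
  set n : ℕ → ℕ := fun k => ns (k + 1) with hndef
  have hn : ∀ k, k + 1 ≤ n k := fun k => hns (k + 1) (by omega)
  have hnm : StrictMono n := fun a b hab => hmono (by omega)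
  set S : ℝ → ℝ := fun x => ∑' k, x ^ n k with hSdef
  have hvα' : ∀ z : ℂ, vα z = if ‖z‖ ≤ r₀ then 1 else (S r₀) ^ α * (S ‖z‖) ^ (-α) := hvα
  have hSmono : ∀ x y : ℝ, 0 ≤ x → x ≤ y → y < 1 → S x ≤ S y := fun x y hx hxy hy =>
    (pow_summable n hn x hx (hxy.trans_lt hy)).tsum_le_tsum
      (fun k => pow_le_pow_left₀ hx hxy _) (pow_summable n hn y (hx.trans hxy) hy)
  have hS0 : 0 < S r₀ :=
    (pow_summable n hn r₀ hr₀0.le hr₀1).tsum_pos (fun k => by positivity) 0 (by positivity)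
  have hC : 0 < (S r₀) ^ α := by positivity
  have hvpos : ∀ z : ℂ, ‖z‖ < 1 → 0 < vα z := by
    intro z hz
    rw [hvα']
    split_ifs with h
    · exact one_pos
    · have : 0 < S ‖z‖ := hS0.trans_le (hSmono _ _ hr₀0.le (not_le.1 h).le hz)
      positivity
  have hv1 : ∀ z : ℂ, ‖z‖ < 1 → vα z ≤ 1 := by
    intro z hz
    rw [hvα']
    split_ifs with h
    · exact le_rfl
    · have h2 := hSmono _ _ hr₀0.le (not_le.1 h).le hz
      have h3 : 0 < S ‖z‖ := hS0.trans_le h2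
      rw [Real.rpow_neg h3.le, ← div_eq_mul_inv, div_le_one (by positivity)]
      exact Real.rpow_le_rpow hS0.le h2 hα0.le
  have hvS : ∀ z : ℂ, ‖z‖ < 1 → vα z * (S ‖z‖ + 1) ^ α ≤ (S r₀ + 1) ^ α := by
    intro z hz
    have hSz : 0 ≤ S ‖z‖ := tsum_nonneg fun k => by positivity
    rw [hvα']
    split_ifs with h
    · rw [one_mul]
      have := hSmono _ _ (norm_nonneg z) h hr₀1
      exact Real.rpow_le_rpow (by linarith) (by linarith) hα0.le
    · have h2 := hSmono _ _ hr₀0.le (not_le.1 h).le hz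
      have h3 : 0 < S ‖z‖ := hS0.trans_le h2
      rw [Real.rpow_neg h3.le, ← div_eq_mul_inv, div_mul_eq_mul_div, div_le_iff₀ (by positivity),
        ← Real.mul_rpow hS0.le (by linarith), ← Real.mul_rpow (by linarith) h3.le]
      refine Real.rpow_le_rpow (by positivity) ?_ hα0.le
      nlinarith
  have hv0 : ∀ ε > (0:ℝ), ∃ r : ℝ, r < 1 ∧ ∀ z ∈ ball (0:ℂ) 1, r ≤ ‖z‖ → vα z < ε := by
    intro ε hε
    have ht := (tendsto_rpow_neg_atTop hα0).const_mul ((S r₀) ^ α)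
    rw [mul_zero] at ht
    obtain ⟨M, hM⟩ := eventually_atTop.1 (ht.eventually_lt_const hε)
    obtain ⟨r, hr1, hr⟩ := sum_large n hn M
    refine ⟨max r ((r₀ + 1) / 2), max_lt hr1 (by linarith), fun z hz hrz => ?_⟩
    have hz' : ‖z‖ < 1 := by simpa using hz
    have h2 : r₀ < ‖z‖ := by linarith [le_max_right r ((r₀ + 1) / 2)]
    rw [hvα', if_neg (not_le.2 h2)]
    exact hM _ (hr _ ((le_max_left _ _).trans hrz) (norm_nonneg z) hz')
  constructor
  · rintro ⟨P, hP⟩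
    obtain ⟨N, hN⟩ := hP (1/16) (by norm_num)
    set N' := max N 1 with hN'
    have hN'1 : 0 < N' := by omega
    have hN'p : (0:ℝ) < N' := by exact_mod_cast hN'1
    obtain ⟨k, hk⟩ := pow_unbounded_of_one_lt (2 * (N':ℝ)) hR
    have hk' : 2 * (N':ℝ) ≤ R ^ (k + 1) := by
      refine hk.le.trans (pow_le_pow_right₀ hR.le (by omega))
    have hb : 1 / 2 ≤ ‖avgPow (lam ^ n k) N'‖ := by
      have h1 := avgPow_near (lam ^ n k) (by rw [norm_pow, hlam, one_pow]) N' hN'1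
      have h2 : ‖1 - lam ^ n k‖ ≤ 1 / R ^ (k + 1) := hsmall (k + 1) (by omega)
      have h3 : (N':ℝ) * ‖1 - lam ^ n k‖ ≤ 1 / 2 := by
        refine (mul_le_mul_of_nonneg_left h2 hN'p.le).trans ?_
        rw [mul_one_div, div_le_div_iff₀ (by positivity) (by norm_num)]
        linarith
      have h4 : ‖(1:ℂ)‖ ≤ ‖1 - avgPow (lam ^ n k) N'‖ + ‖avgPow (lam ^ n k) N'‖ := by
        have := norm_add_le (1 - avgPow (lam ^ n k) N') (avgPow (lam ^ n k) N')
        rwa [sub_add_cancel] at this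
      rw [norm_one] at h4
      linarith
    set m := n k with hm
    set T : Set ℝ := (fun z : ℂ => vα z * ‖z‖ ^ m) '' ball (0:ℂ) 1 with hT
    have hTne : T.Nonempty := ⟨_, 0, by simp, rfl⟩
    have hTle : ∀ z : ℂ, ‖z‖ < 1 → vα z * ‖z‖ ^ m ≤ vα z := fun z hz =>
      mul_le_of_le_one_right (hvpos z hz).le (pow_le_one₀ (norm_nonneg z) hz.le)
    have hTbd : BddAbove T := by
      refine ⟨1, ?_⟩
      rintro _ ⟨z, hz, rfl⟩
      have hz' : ‖z‖ < 1 := by simpa using hz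
      exact (hTle z hz').trans (hv1 z hz')
    set B := sSup T with hB
    have hBpos : 0 < B := by
      have hz : ‖(r₀ : ℂ)‖ = r₀ := by rw [Complex.norm_real, Real.norm_of_nonneg hr₀0.le]
      have h1 : vα (r₀:ℂ) * ‖(r₀ : ℂ)‖ ^ m ≤ B :=
        le_csSup hTbd ⟨(r₀:ℂ), by rw [mem_ball_zero_iff, hz]; exact hr₀1, rfl⟩
      have h2 := hvpos (r₀:ℂ) (by rw [hz]; exact hr₀1)
      rw [hz] at h1
      have : 0 < vα (r₀:ℂ) * r₀ ^ m := by positivity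
      linarith
    have hTB : ∀ z ∈ ball (0:ℂ) 1, vα z * ‖z‖ ^ m ≤ B := fun z hz => le_csSup hTbd ⟨z, hz, rfl⟩
    set f : ℂ → ℂ := fun w => ((B⁻¹ : ℝ) : ℂ) * w ^ m with hf
    have hfn : ∀ z, ‖f z‖ = B⁻¹ * ‖z‖ ^ m := fun z => by
      rw [hf]; simp only
      rw [norm_mul, norm_pow, Complex.norm_real, Real.norm_of_nonneg (by positivity)]
    have hf1 : ∀ z ∈ ball (0:ℂ) 1, vα z * ‖f z‖ ≤ 1 := fun z hz => by
      rw [hfn, mul_left_comm, inv_mul_le_iff₀ hBpos, mul_one]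
      exact hTB z hz
    have hf0 : IsHv0 vα f := by
      refine ⟨⟨by rw [hf]; fun_prop, 1, hf1⟩, fun ε hε => ?_⟩
      obtain ⟨r, hr, hr2⟩ := hv0 (B * ε) (by positivity)
      refine ⟨r, hr, fun z hz hrz => ?_⟩
      rw [hfn, mul_left_comm, inv_mul_lt_iff₀ hBpos]
      exact (hTle z (by simpa using hz)).trans_lt (hr2 z hz hrz)
    obtain ⟨_, ⟨z, hz, rfl⟩, hlt⟩ := exists_lt_of_lt_csSup hTne (by linarith : B / 2 < sSup T)
    have hz' : ‖z‖ < 1 := by simpa using hz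
    have hlim : Tendsto (fun M => cesaro (fun w => lam * w) f M z) atTop (𝓝 0) := by
      have h1 := (avgPow_tendsto (lam ^ m) (by rw [norm_pow, hlam, one_pow])
        (hnotroot m (by have := hn k; omega))).mul_const (f z)
      rw [zero_mul] at h1
      refine h1.congr fun M => ?_
      rw [hf, cesaro_monomial]
    have h1 := small_of_limit _ (P f z) (vα z) (1/16) N'
      (fun M hM => hN M (le_trans (le_max_left _ _) hM) f hf0 hf1 z hz) (hvpos z hz').le hlim
    have h2 : cesaro (fun w => lam * w) f N' z = avgPow (lam ^ m) N' * f z := by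
      rw [hf, cesaro_monomial]
    simp only [h2] at h1
    rw [norm_mul] at h1
    have h3 : 1 / 2 < vα z * ‖f z‖ := by
      rw [hfn, mul_left_comm, lt_inv_mul_iff₀ hBpos]
      simp only at hlt
      linarith
    have h4 : (1/2) * (vα z * ‖f z‖) ≤ ‖avgPow (lam ^ m) N'‖ * (vα z * ‖f z‖) :=
      mul_le_mul_of_nonneg_right hb (by linarith)
    have h5 : vα z * (‖avgPow (lam ^ m) N'‖ * ‖f z‖) = ‖avgPow (lam ^ m) N'‖ * (vα z * ‖f z‖) := by
      ring
    linarith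
  · intro hall
    have hF : IsHvInf vα (testF α n) := by
      refine ⟨testF_diff hα0 hα1 n hn, 2 * (S r₀ + 1) ^ α, fun z hz => ?_⟩
      have hz' : ‖z‖ < 1 := by simpa using hz
      have h1 := mul_le_mul_of_nonneg_left (testF_norm_le hα0 hα1 n hn z hz') (hvpos z hz').le
      have h2 := hvS z hz'
      have h3 : vα z * (2 * (∑' k, ‖z‖ ^ n k + 1) ^ α) = 2 * (vα z * (S ‖z‖ + 1) ^ α) := by ring
      linarith
    obtain ⟨g, hg⟩ := hall _ hF
    set C := (S r₀) ^ α with hCdef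
    obtain ⟨N, hN⟩ := hg (C / 100) (by positivity)
    set N' := max N 1 with hN'
    have hN'1 : 0 < N' := by omega
    obtain ⟨E, hE⟩ := cesaro_testF_near hα0 hα1 n hn lam hlam R hR
      (fun k => hsmall (k + 1) (by omega)) N' hN'1
    have ht1 : Tendsto (fun m : ℕ => ((m:ℝ) + 1) ^ α) atTop atTop :=
      (tendsto_rpow_atTop hα0).comp (tendsto_atTop_add_const_right _ _ tendsto_natCast_atTop_atTop)
    have ht2 : Tendsto (fun m : ℕ => 1 / ((m:ℝ) + 1)) atTop (𝓝 0) :=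
      tendsto_one_div_add_atTop_nhds_zero_nat
    obtain ⟨m, hm1, hm2⟩ := ((ht1.eventually_ge_atTop (4 * E)).and
      (ht2.eventually_lt_const (by linarith : 0 < 1 - r₀))).exists
    obtain ⟨r, hr, hr0, hr1, hlow, hup⟩ := lower_bound hα0 hα1 n hn hnm m
    set F : ℝ := ∑' k, coefA α k * r ^ n k with hFdef
    have hzn : ‖(r:ℂ)‖ = r := by rw [Complex.norm_real, Real.norm_of_nonneg hr0]
    have hz' : ‖(r:ℂ)‖ < 1 := by rw [hzn]; exact hr1
    have hFz : testF α n (r:ℂ) = (F : ℂ) := by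
      rw [hFdef, testF, Complex.ofReal_tsum]
      push_cast; rfl
    have hF0 : 0 ≤ F := le_trans (by positivity) hlow
    have h1 := small_of_limit _ (g r) (vα r) (C / 100) N'
      (fun M hM => hN M (le_trans (le_max_left _ _) hM) (r:ℂ) (by simpa using hz'))
      (hvpos _ hz').le (cesaro_testF_tendsto hα0 hα1 n hn lam hlam hnotroot (r:ℂ) hz')
    have h2 := hE (r:ℂ) hz'
    have h3 : F / 2 ≤ ‖cesaro (fun w => lam * w) (testF α n) N' (r:ℂ)‖ := by
      have h4 := norm_sub_norm_le (testF α n (r:ℂ)) (cesaro (fun w => lam * w) (testF α n) N' (r:ℂ))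
      have h5 : ‖testF α n (r:ℂ)‖ = F := by
        rw [hFz, Complex.norm_real, Real.norm_of_nonneg hF0]
      linarith
    have h4 := mul_le_mul_of_nonneg_left h3 (hvpos _ hz').le
    have h5 : C ≤ 12 * (vα r * F) := by
      have hrr : ¬ ‖(r:ℂ)‖ ≤ r₀ := by rw [hzn, not_le]; linarith
      have hSr : 0 < S r := hS0.trans_le (hSmono _ _ hr₀0.le (by rw [hzn] at hrr; linarith) hr1)
      have hup' : (S r) ^ α ≤ 12 * F := hup
      rw [hvα', if_neg hrr, hzn, Real.rpow_neg hSr.le]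
      have e : 12 * (C * ((S r) ^ α)⁻¹ * F) = C * (12 * F) / (S r) ^ α := by
        rw [div_eq_mul_inv]; ring
      rw [e, le_div_iff₀ (by positivity)]
      exact mul_le_mul_of_nonneg_left hup' hC.le
    linarith
end
end
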